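/- Let m, r be positive integers with r ≥ 2, and let M = ⌈(2^{3r-2}(r-1)^{2r-1}/r!)^{1/(r-1)} · m · (m(r-1)+r)^{1/(r-1)}⌉. If q is a squarefree positive integer with φ(q) ≥ M, then there are at least (⌈m/(r-1)⌉! / (M(M-1)···(M-⌈m/(r-1)⌉+1))) · φ(q)(φ(q)-1)···(φ(q)-⌈m/(r-1)⌉+1) many m-tuples a ∈ ((ℤ/qℤ)^×)^m such that π(x;q,a) → ∞ as x → ∞. -/

import Mathlib

open Filter

/-- `π(x; q, a)`: the number of indices `n` with `p_n ≤ x` such that the `m` consecutive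
primes `p_n, p_{n+1}, …, p_{n+m-1}` satisfy `p_{n+i} ≡ a_i (mod q)` for all `i`. -/
noncomputable def consecCount (q m : ℕ) (a : Fin m → (ZMod q)ˣ) (x : ℝ) : ℕ :=
  Set.ncard {n : ℕ | (Nat.nth Nat.Prime n : ℝ) ≤ x ∧
    ∀ i : Fin m, ((Nat.nth Nat.Prime (n + (i : ℕ)) : ℕ) : ZMod q) = (a i : ZMod q)}

/-- The quantity `M = ⌈(2^(3r-2) (r-1)^(2r-1) / r!)^(1/(r-1)) · m · (m(r-1)+r)^(1/(r-1))⌉`. -/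
noncomputable def Mval (m r : ℕ) : ℕ :=
  ⌈((2 : ℝ) ^ (3 * r - 2) * ((r : ℝ) - 1) ^ (2 * r - 1) / (r.factorial : ℝ)) ^
        ((1 : ℝ) / ((r : ℝ) - 1)) *
      (m : ℝ) * ((m : ℝ) * ((r : ℝ) - 1) + (r : ℝ)) ^ ((1 : ℝ) / ((r : ℝ) - 1))⌉₊

/-!
Let `𝒜` be the set of patterns `(p_n, …, p_{n + k}) mod q`, where `m = k + 1`, shown by infinitely
many `n`. The proof bounds `#𝒜` from below by double counting. Replacing `q` by a multiple `Q`
divisible by all small primes multiplies the number of possible patterns by the size of the fibres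
of `((ℤ/Q)ˣ)^m → ((ℤ/q)ˣ)^m`, so a lower bound proportional to `φ(Q)^m` descends to `q`.

Weight `n` by `e^{-s (p_{n + k} - p_n)}`, with `s` of order `1 / log x`. Chebyshev's lower bound for
`π(x)` and `e^y ≥ 1 + y` show that the weights with `p_n ≤ x` add up to at least a constant times
`x / log x`. On the other hand all but finitely many `n` have a pattern in `𝒜`, and the `n` with a
given pattern are few: Selberg's sieve bounds the number of `n` with a given gap vector in terms of
its singular series, which is close to `1` on average over the gap vectors in given classes
modulo `Q`, since only primes not dividing `Q` contribute to its fluctuation.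
-/

namespace ConsecutivePrimes

open Finset

/-! ### Sums of periodic functions -/

section PeriodicSums

variable {α : Type*}

lemma periodic_prod [CommMonoid α] {s : Finset ℕ} {u : ℕ → ℕ → α}
    (hu : ∀ p ∈ s, Function.Periodic (u p) p) :
    Function.Periodic (fun n => ∏ p ∈ s, u p n) (∏ p ∈ s, p) := by
  intro n
  refine prod_congr rfl fun p hp => ?_
  obtain ⟨c, hc⟩ := dvd_prod_of_mem (fun p => p) hp
  rw [hc, mul_comm]
  exact (hu p hp).nat_mul c n

lemma image_mod_mod_range_mul {p d : ℕ} (hp : 0 < p) (hd : 0 < d) (hpd : p.Coprime d) :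
    Set.InjOn (fun n => (n % p, n % d)) (range (p * d)) ∧
      (range (p * d)).image (fun n => (n % p, n % d)) = range p ×ˢ range d := by
  have injOn : Set.InjOn (fun n => (n % p, n % d)) (range (p * d)) := by
    intro a ha b hb hab
    simp only [coe_range, Set.mem_Iio] at ha hb
    simp only [Prod.mk.injEq] at hab
    exact ((Nat.modEq_and_modEq_iff_modEq_mul hpd).1 hab).eq_of_lt_of_lt ha hb
  refine ⟨injOn, eq_of_subset_of_card_le ?_ ?_⟩
  · rintro x hx
    obtain ⟨n, -, rfl⟩ := mem_image.1 hx
    simp [Nat.mod_lt _ hp, Nat.mod_lt _ hd]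
  · simp [card_image_of_injOn injOn]

lemma sum_range_mul_of_coprime [CommSemiring α] {f g : ℕ → α} {p d : ℕ} (hp : 0 < p) (hd : 0 < d)
    (hpd : p.Coprime d) (hf : Function.Periodic f p) (hg : Function.Periodic g d) :
    ∑ n ∈ range (p * d), f n * g n = (∑ a ∈ range p, f a) * ∑ b ∈ range d, g b := by
  obtain ⟨injOn, image_eq⟩ := image_mod_mod_range_mul hp hd hpd
  rw [sum_mul_sum, ← sum_product', ← image_eq, sum_image injOn]
  exact sum_congr rfl fun n _ => by simp only [hf.map_mod_nat, hg.map_mod_nat]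

lemma sum_range_prod_eq_prod_sum_range [CommSemiring α] {s : Finset ℕ} {u : ℕ → ℕ → α}
    (hpos : ∀ p ∈ s, 0 < p) (hcop : (s : Set ℕ).Pairwise Nat.Coprime)
    (hu : ∀ p ∈ s, Function.Periodic (u p) p) :
    ∑ n ∈ range (∏ p ∈ s, p), ∏ p ∈ s, u p n = ∏ p ∈ s, ∑ r ∈ range p, u p r := by
  induction s using Finset.induction_on with
  | empty => simp
  | insert p s hps ih =>
    simp only [mem_insert, forall_eq_or_imp] at hpos hu
    rw [coe_insert] at hcop
    simp only [prod_insert hps]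
    rw [← ih hpos.2 (hcop.mono (Set.subset_insert _ _)) hu.2]
    refine sum_range_mul_of_coprime hpos.1 (prod_pos hpos.2) ?_ hu.1 (periodic_prod hu.2)
    refine Nat.Coprime.prod_right fun q hq => ?_
    exact hcop (Set.mem_insert _ _) (Set.mem_insert_of_mem _ hq) (by rintro rfl; exact hps hq)

lemma sum_range_mul_add_of_periodic [Semiring α] {f : ℕ → α} {D : ℕ} (hf : Function.Periodic f D)
    (k r : ℕ) :
    ∑ j ∈ range (D * k + r), f j = k * ∑ j ∈ range D, f j + ∑ j ∈ range r, f j := by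
  induction k with
  | zero => simp
  | succ k ih =>
    have shift (j : ℕ) : f (D + j) = f j := by rw [add_comm]; exact hf j
    rw [show D * (k + 1) + r = D + (D * k + r) by ring, sum_range_add]
    simp only [shift, ih]
    rw [Nat.cast_succ, add_one_mul, ← add_assoc, add_comm (∑ j ∈ range D, f j)]

lemma sum_range_le_of_periodic {f : ℕ → ℝ} {D : ℕ} (hD : 0 < D) (hf : Function.Periodic f D)
    (J : ℕ) :
    ∑ j ∈ range J, f j ≤ J * ((∑ j ∈ range D, f j) / D) + 2 * ∑ j ∈ range D, |f j| := by
  have hD' : (0 : ℝ) < D := by exact_mod_cast hD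
  have hlt : J % D < D := Nat.mod_lt J hD
  have hlt' : ((J % D : ℕ) : ℝ) ≤ D := by exact_mod_cast hlt.le
  set S := ∑ j ∈ range D, f j
  set T := ∑ j ∈ range D, |f j|
  have hST : |S| ≤ T := abs_sum_le_sum_abs _ _
  have remainder_le : ∑ j ∈ range (J % D), f j ≤ T :=
    (sum_le_sum fun j _ => le_abs_self _).trans <|
      sum_le_sum_of_subset_of_nonneg (range_mono hlt.le) fun _ _ _ => abs_nonneg _
  have mean_remainder_ge : -T ≤ (J % D : ℕ) * (S / D) := by
    rw [← mul_div_assoc, le_div_iff₀ hD']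
    nlinarith [neg_abs_le S, abs_nonneg S, Nat.cast_nonneg (α := ℝ) (J % D)]
  have main_term : (J : ℝ) * (S / D) = (J / D : ℕ) * S + (J % D : ℕ) * (S / D) := by
    have hJ : (J : ℝ) = D * (J / D : ℕ) + (J % D : ℕ) := by
      exact_mod_cast (Nat.div_add_mod J D).symm
    rw [hJ]; field_simp
  have split := sum_range_mul_add_of_periodic hf (J / D) (J % D)
  rw [Nat.div_add_mod] at split
  linarith

end PeriodicSums

/-! ### Selberg's sieve in orthogonality form -/

section Selberg

/-- The mean-zero function of `j` modulo `p` that equals `-1` on the `κ` sieved residue classes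
`{j | ω p j}` and `κ / (p - κ)` on the remaining ones. Products of these functions over distinct
sets of primes are orthogonal, which replaces the diagonalization in Selberg's sieve. -/
noncomputable def sieveWeight (κ : ℕ) (ω : ℕ → ℕ → Prop) [∀ p, DecidablePred (ω p)]
    (p j : ℕ) : ℝ :=
  if ω p j then -1 else (κ : ℝ) / (p - κ)

variable {κ : ℕ} {ω : ℕ → ℕ → Prop} [∀ p, DecidablePred (ω p)] {p : ℕ}

lemma sieveWeight_periodic (hω : Function.Periodic (ω p) p) :
    Function.Periodic (sieveWeight κ ω p) p := fun j => by
  simp only [sieveWeight, hω j]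

lemma sum_ite_of_card_eq (hcard : #{j ∈ range p | ω p j} = κ) (x y : ℝ) :
    ∑ j ∈ range p, (if ω p j then x else y) = κ * x + (p - κ) * y := by
  have card_compl : (#{j ∈ range p | ¬ω p j} : ℝ) = p - κ := by
    rw [eq_sub_iff_add_eq', ← hcard]
    exact_mod_cast (card_filter_add_card_filter_not (s := range p) (ω p)).trans (card_range p)
  rw [sum_ite, sum_const, sum_const, nsmul_eq_mul, nsmul_eq_mul, hcard, card_compl]

lemma sum_sieveWeight (hκp : κ < p) (hcard : #{j ∈ range p | ω p j} = κ) :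
    ∑ j ∈ range p, sieveWeight κ ω p j = 0 := by
  have hne : (p : ℝ) - κ ≠ 0 := sub_ne_zero.2 (by exact_mod_cast hκp.ne')
  simp only [sieveWeight, sum_ite_of_card_eq hcard]
  rw [mul_div_cancel₀ _ hne]; ring

lemma sum_sieveWeight_sq (hκp : κ < p) (hcard : #{j ∈ range p | ω p j} = κ) :
    ∑ j ∈ range p, sieveWeight κ ω p j ^ 2 = p * (κ / (p - κ)) := by
  have hne : (p : ℝ) - κ ≠ 0 := sub_ne_zero.2 (by exact_mod_cast hκp.ne')
  simp only [sieveWeight, ite_pow, sum_ite_of_card_eq hcard]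
  field_simp; ring

lemma sum_abs_sieveWeight (hκp : κ < p) (hcard : #{j ∈ range p | ω p j} = κ) :
    ∑ j ∈ range p, |sieveWeight κ ω p j| = 2 * κ := by
  have hpos : (0 : ℝ) < p - κ := sub_pos.2 (by exact_mod_cast hκp)
  simp only [sieveWeight, apply_ite abs, sum_ite_of_card_eq hcard, abs_neg, abs_one,
    abs_of_nonneg (div_nonneg (Nat.cast_nonneg (α := ℝ) κ) hpos.le)]
  field_simp; ring

lemma prod_mul_prod_eq_prod_union_pow {ι α : Type*} [DecidableEq ι] [CommMonoid α]
    (s t : Finset ι) (f : ι → α) :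
    (∏ i ∈ s, f i) * ∏ i ∈ t, f i = ∏ i ∈ s ∪ t, f i ^ (if i ∈ s ∩ t then 2 else 1) := by
  have pow_eq (i : ι) : f i ^ (if i ∈ s ∩ t then 2 else 1) =
      f i * if i ∈ s ∩ t then f i else 1 := by
    split_ifs <;> simp [sq]
  simp only [pow_eq, prod_mul_distrib, prod_ite_mem]
  rw [inter_eq_right.2 (inter_subset_left.trans subset_union_left), prod_union_inter]

variable {P : Finset ℕ} (hκ : 0 < κ) (hP : ∀ p ∈ P, 2 * κ ≤ p)
  (hcop : (P : Set ℕ).Pairwise Nat.Coprime) (hper : ∀ p ∈ P, Function.Periodic (ω p) p)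
  (hcard : ∀ p ∈ P, #{j ∈ range p | ω p j} = κ)
include hκ hP hcop hper hcard

lemma sum_prod_sieveWeight_mul_prod {s t : Finset ℕ} (hs : s ⊆ P) (ht : t ⊆ P) :
    (∑ j ∈ range (∏ p ∈ s ∪ t, p),
        (∏ p ∈ s, sieveWeight κ ω p j) * ∏ p ∈ t, sieveWeight κ ω p j) / (∏ p ∈ s ∪ t, p : ℕ) =
      if s = t then ∏ p ∈ s, (κ : ℝ) / (p - κ) else 0 := by
  have hst : s ∪ t ⊆ P := union_subset hs ht
  have hlt (p) (hp : p ∈ P) : κ < p := by have := hP p hp; omega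
  simp only [prod_mul_prod_eq_prod_union_pow]
  rw [sum_range_prod_eq_prod_sum_range (fun p hp => (Nat.zero_le κ).trans_lt (hlt p (hst hp)))
    (hcop.mono (by exact_mod_cast hst))
    fun p hp j => congrArg (· ^ _) (sieveWeight_periodic (hper p (hst hp)) j)]
  split_ifs with h
  · subst h
    simp only [union_self, inter_self, Nat.cast_prod, ← prod_div_distrib]
    refine prod_congr rfl fun p hp => ?_
    have hp0 : (p : ℝ) ≠ 0 := Nat.cast_ne_zero.2 (by have := hlt p (hs hp); omega)
    simp only [hp, if_true]
    rw [sum_sieveWeight_sq (hlt p (hs hp)) (hcard p (hs hp)), mul_div_cancel_left₀ _ hp0]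
  · obtain ⟨p, hp, hpn⟩ : ∃ p ∈ s ∪ t, p ∉ s ∩ t := by
      by_contra! hcon
      exact h (subset_antisymm (fun p hp => (mem_inter.1 (hcon p (mem_union_left _ hp))).2)
        fun p hp => (mem_inter.1 (hcon p (mem_union_right _ hp))).1)
    rw [prod_eq_zero hp, zero_div]
    simpa only [hpn, if_false, pow_one] using
      sum_sieveWeight (hlt p (hst hp)) (hcard p (hst hp))

lemma sum_abs_prod_sieveWeight_mul_prod_le {s t : Finset ℕ} (hs : s ⊆ P) (ht : t ⊆ P) :
    ∑ j ∈ range (∏ p ∈ s ∪ t, p),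
        |(∏ p ∈ s, sieveWeight κ ω p j) * ∏ p ∈ t, sieveWeight κ ω p j| ≤
      (2 * κ : ℝ) ^ #s * (2 * κ : ℝ) ^ #t := by
  have hst : s ∪ t ⊆ P := union_subset hs ht
  have hlt (p) (hp : p ∈ P) : κ < p := by have := hP p hp; omega
  simp only [prod_mul_prod_eq_prod_union_pow, abs_prod, abs_pow]
  rw [sum_range_prod_eq_prod_sum_range (fun p hp => (Nat.zero_le κ).trans_lt (hlt p (hst hp)))
    (hcop.mono (by exact_mod_cast hst))
    fun p hp j => congrArg (|·| ^ _) (sieveWeight_periodic (hper p (hst hp)) j)]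
  have factor_le : ∀ p ∈ s ∪ t,
      ∑ j ∈ range p, |sieveWeight κ ω p j| ^ (if p ∈ s ∩ t then 2 else 1) ≤ 2 * κ := by
    intro p hp
    have hpos : (0 : ℝ) < p - κ := sub_pos.2 (by exact_mod_cast hlt p (hst hp))
    have h2 : (2 * κ : ℝ) ≤ p := by exact_mod_cast hP p (hst hp)
    split_ifs
    · simp only [sq_abs]
      rw [sum_sieveWeight_sq (hlt p (hst hp)) (hcard p (hst hp)), ← mul_div_assoc,
        div_le_iff₀ hpos]
      nlinarith
    · simp only [pow_one]
      exact (sum_abs_sieveWeight (hlt p (hst hp)) (hcard p (hst hp))).le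
  calc _ ≤ ∏ _p ∈ s ∪ t, (2 * κ : ℝ) :=
        prod_le_prod (fun p _ => sum_nonneg fun _ _ => by positivity) factor_le
    _ ≤ (2 * κ : ℝ) ^ (#s + #t) := by
        rw [prod_const]
        exact pow_le_pow_right₀ (by exact_mod_cast (by omega : 1 ≤ 2 * κ)) (card_union_le s t)
    _ = _ := pow_add _ _ _

lemma sum_range_prod_sieveWeight_mul_prod_le {s t : Finset ℕ} (hs : s ⊆ P) (ht : t ⊆ P) (J : ℕ) :
    ∑ j ∈ range J, (∏ p ∈ s, sieveWeight κ ω p j) * ∏ p ∈ t, sieveWeight κ ω p j ≤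
      J * (if s = t then ∏ p ∈ s, (κ : ℝ) / (p - κ) else 0) +
        2 * ((2 * κ : ℝ) ^ #s * (2 * κ : ℝ) ^ #t) := by
  have hst : s ∪ t ⊆ P := union_subset hs ht
  have hpos : 0 < ∏ p ∈ s ∪ t, p := prod_pos fun p hp => by have := hP p (hst hp); omega
  have periodic : Function.Periodic
      (fun j => (∏ p ∈ s, sieveWeight κ ω p j) * ∏ p ∈ t, sieveWeight κ ω p j)
      (∏ p ∈ s ∪ t, p) := by
    simp only [prod_mul_prod_eq_prod_union_pow]
    exact periodic_prod fun p hp j => congrArg (· ^ _) (sieveWeight_periodic (hper p (hst hp)) j)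
  rw [← sum_prod_sieveWeight_mul_prod hκ hP hcop hper hcard hs ht]
  refine (sum_range_le_of_periodic hpos periodic J).trans ?_
  gcongr
  exact sum_abs_prod_sieveWeight_mul_prod_le hκ hP hcop hper hcard hs ht

lemma sum_range_sq_sum_prod_sieveWeight_le {D : Finset (Finset ℕ)} (hD : ∀ t ∈ D, t ⊆ P) (J : ℕ) :
    ∑ j ∈ range J, (∑ t ∈ D, ∏ p ∈ t, sieveWeight κ ω p j) ^ 2 ≤
      J * ∑ t ∈ D, ∏ p ∈ t, (κ : ℝ) / (p - κ) + 2 * (∑ t ∈ D, (2 * κ : ℝ) ^ #t) ^ 2 := by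
  calc ∑ j ∈ range J, (∑ t ∈ D, ∏ p ∈ t, sieveWeight κ ω p j) ^ 2
      = ∑ s ∈ D, ∑ t ∈ D, ∑ j ∈ range J,
          (∏ p ∈ s, sieveWeight κ ω p j) * ∏ p ∈ t, sieveWeight κ ω p j := by
        simp only [sq, sum_mul_sum]
        rw [sum_comm]
        exact sum_congr rfl fun s _ => sum_comm
    _ ≤ ∑ s ∈ D, ∑ t ∈ D, (J * (if s = t then ∏ p ∈ s, (κ : ℝ) / (p - κ) else 0) +
          2 * ((2 * κ : ℝ) ^ #s * (2 * κ : ℝ) ^ #t)) :=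
        sum_le_sum fun s hs => sum_le_sum fun t ht =>
          sum_range_prod_sieveWeight_mul_prod_le hκ hP hcop hper hcard (hD s hs) (hD t ht) J
    _ = _ := by
        simp only [sum_add_distrib, ← mul_sum, sq, sum_mul_sum, sum_ite_eq]
        simp only [sum_ite_mem, inter_self]

theorem selberg_sieve {D : Finset (Finset ℕ)} (hD : ∀ t ∈ D, t ⊆ P) (hempty : ∅ ∈ D) (J : ℕ) :
    (#{j ∈ range J | ∀ p ∈ P, ¬ω p j} : ℝ) ≤
      J / ∑ t ∈ D, ∏ p ∈ t, (κ : ℝ) / (p - κ) + 2 * (∑ t ∈ D, (2 * κ : ℝ) ^ #t) ^ 2 := by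
  set S := {j ∈ range J | ∀ p ∈ P, ¬ω p j}
  set L := ∑ t ∈ D, ∏ p ∈ t, (κ : ℝ) / (p - κ)
  set E := (∑ t ∈ D, (2 * κ : ℝ) ^ #t) ^ 2
  have term_nonneg : ∀ t ∈ D, 0 ≤ ∏ p ∈ t, (κ : ℝ) / (p - κ) := fun t ht =>
    prod_nonneg fun p hp => div_nonneg κ.cast_nonneg <| sub_nonneg.2 <| by
      exact_mod_cast (by have := hP p (hD t ht hp); omega : κ ≤ p)
  have one_le_L : 1 ≤ L := prod_empty.symm.trans_le (single_le_sum term_nonneg hempty)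
  have eq_on_sifted : ∀ j ∈ S, (∑ t ∈ D, ∏ p ∈ t, sieveWeight κ ω p j) ^ 2 = L ^ 2 := by
    intro j hj
    refine congrArg (· ^ 2) (sum_congr rfl fun t ht => prod_congr rfl fun p hp => ?_)
    exact if_neg ((mem_filter.1 hj).2 p (hD t ht hp))
  have quadratic_bound : #S * L ^ 2 ≤ J * L + 2 * E :=
    calc #S * L ^ 2 = ∑ j ∈ S, (∑ t ∈ D, ∏ p ∈ t, sieveWeight κ ω p j) ^ 2 := by
          rw [sum_congr rfl eq_on_sifted, sum_const, nsmul_eq_mul]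
      _ ≤ ∑ j ∈ range J, (∑ t ∈ D, ∏ p ∈ t, sieveWeight κ ω p j) ^ 2 :=
          sum_le_sum_of_subset_of_nonneg (filter_subset _ _) fun _ _ _ => sq_nonneg _
      _ ≤ J * L + 2 * E := sum_range_sq_sum_prod_sieveWeight_le hκ hP hcop hper hcard hD J
  calc (#S : ℝ) ≤ (J * L + 2 * E) / L ^ 2 := (le_div_iff₀ (by positivity)).2 quadratic_bound
    _ = J / L + 2 * E / L ^ 2 := by field_simp
    _ ≤ J / L + 2 * E := by
        gcongr
        exact div_le_self (by positivity) (one_le_pow₀ one_le_L)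

end Selberg

/-! ### A lower bound for the sieve density -/

section Density

open scoped ArithmeticFunction.Omega

lemma sum_le_sum_of_injOn {ι κ N : Type*} [AddCommMonoid N] [PartialOrder N]
    [IsOrderedAddMonoid N] {s : Finset ι} {t : Finset κ} {f : ι → N} {g : κ → N} (e : ι → κ)
    (he : ∀ i ∈ s, e i ∈ t) (hinj : Set.InjOn e s) (hfg : ∀ i ∈ s, f i ≤ g (e i))
    (hg : ∀ j ∈ t, 0 ≤ g j) : ∑ i ∈ s, f i ≤ ∑ j ∈ t, g j := by
  classical
  calc ∑ i ∈ s, f i ≤ ∑ i ∈ s, g (e i) := sum_le_sum hfg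
    _ = ∑ j ∈ s.image e, g j := (sum_image hinj).symm
    _ ≤ ∑ j ∈ t, g j :=
        sum_le_sum_of_subset_of_nonneg (image_subset_iff.2 he) fun j hj _ => hg j hj

lemma sum_one_div_filter_dvd_le {A : Finset ℕ} {p : ℕ} (hp : 0 < p)
    (hA : ∀ n, p * n ∈ A → n ∈ A) :
    ∑ n ∈ A with p ∣ n, 1 / (n : ℝ) ≤ 1 / p * ∑ n ∈ A, 1 / (n : ℝ) := by
  rw [mul_sum]
  refine sum_le_sum_of_injOn (· / p) ?_ ?_ ?_ fun _ _ => by positivity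
  · rintro n hn
    obtain ⟨hnA, c, rfl⟩ := mem_filter.1 hn
    simpa only [Nat.mul_div_cancel_left c hp] using hA c hnA
  · exact fun a ha b hb hab => (Nat.div_left_inj (mem_filter.1 ha).2 (mem_filter.1 hb).2).1 hab
  · rintro n hn
    obtain ⟨c, rfl⟩ := (mem_filter.1 hn).2
    rw [Nat.mul_div_cancel_left c hp, one_div_mul_one_div, Nat.cast_mul]

lemma prod_mul_sum_one_div_le (Y : ℕ) {s : Finset ℕ} (hs : ∀ p ∈ s, 0 < p) :
    (∏ p ∈ s, (1 - (p : ℝ)⁻¹)) * ∑ n ∈ Icc 1 Y, 1 / (n : ℝ) ≤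
      ∑ n ∈ Icc 1 Y with ∀ p ∈ s, ¬p ∣ n, 1 / (n : ℝ) := by
  induction s using Finset.induction_on with
  | empty => simp
  | insert p s hps ih =>
    simp only [mem_insert, forall_eq_or_imp] at hs
    set A := {n ∈ Icc 1 Y | ∀ q ∈ s, ¬q ∣ n} with hA
    have one_le : (1 : ℝ) ≤ p := by exact_mod_cast hs.1
    have filter_insert_eq : {n ∈ Icc 1 Y | ∀ q ∈ insert p s, ¬q ∣ n} = {n ∈ A | ¬p ∣ n} := by
      ext n; simp only [hA, mem_filter, mem_insert, forall_eq_or_imp]; tauto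
    have multiples_le : ∑ n ∈ A with p ∣ n, 1 / (n : ℝ) ≤ 1 / p * ∑ n ∈ A, 1 / (n : ℝ) := by
      refine sum_one_div_filter_dvd_le hs.1 fun n hn => ?_
      simp only [hA, mem_filter, mem_Icc] at hn ⊢
      exact ⟨⟨Nat.pos_of_mul_pos_left hn.1.1, (Nat.le_mul_of_pos_left n hs.1).trans hn.1.2⟩,
        fun q hq hqn => hn.2 q hq (hqn.mul_left p)⟩
    calc _ = (1 - (p : ℝ)⁻¹) *
          ((∏ q ∈ s, (1 - (q : ℝ)⁻¹)) * ∑ n ∈ Icc 1 Y, 1 / (n : ℝ)) := by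
          rw [prod_insert hps, mul_assoc]
      _ ≤ (1 - (p : ℝ)⁻¹) * ∑ n ∈ A, 1 / (n : ℝ) :=
          mul_le_mul_of_nonneg_left (ih hs.2) (sub_nonneg.2 (inv_le_one_of_one_le₀ one_le))
      _ ≤ ∑ n ∈ A with ¬p ∣ n, 1 / (n : ℝ) := by
          have := sum_filter_add_sum_filter_not A (p ∣ ·) fun n => 1 / (n : ℝ)
          rw [one_div] at multiples_le
          linarith
      _ = _ := by rw [filter_insert_eq]

lemma totient_div_self (n : ℕ) (hn : n ≠ 0) :
    (n.totient : ℝ) / n = ∏ p ∈ n.primeFactors, (1 - (p : ℝ)⁻¹) := by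
  rw [div_eq_iff (Nat.cast_ne_zero.2 hn), mul_comm]
  have h := congrArg (Rat.cast (K := ℝ)) (Nat.totient_eq_mul_prod_factors n)
  push_cast at h
  exact h

lemma sum_divisors_pow_cardFactors_le (j n : ℕ) (hn : n ≠ 0) :
    ∑ d ∈ n.divisors, j ^ Ω d ≤ (j + 1) ^ Ω n := by
  induction n using Nat.recOnMul with
  | zero => exact absurd rfl hn
  | one => simp
  | prime p hp =>
    rw [hp.sum_divisors, ArithmeticFunction.cardFactors_apply_prime hp]; simp
  | mul a b iha ihb =>
    obtain ⟨ha, hb⟩ := mul_ne_zero_iff.1 hn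
    calc ∑ d ∈ (a * b).divisors, j ^ Ω d
        ≤ ∑ x ∈ a.divisors ×ˢ b.divisors, j ^ Ω (x.1 * x.2) := by
          rw [Nat.divisors_mul]
          exact sum_image_le_of_nonneg fun _ _ => Nat.zero_le _
      _ = (∑ d ∈ a.divisors, j ^ Ω d) * ∑ d ∈ b.divisors, j ^ Ω d := by
          rw [sum_mul_sum, ← sum_product']
          refine sum_congr rfl fun x hx => ?_
          rw [mem_product] at hx
          rw [ArithmeticFunction.cardFactors_mul (Nat.pos_of_mem_divisors hx.1).ne'
            (Nat.pos_of_mem_divisors hx.2).ne', pow_add]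
      _ ≤ (j + 1) ^ Ω (a * b) := by
          rw [ArithmeticFunction.cardFactors_mul ha hb, pow_add]
          exact Nat.mul_le_mul (iha ha) (ihb hb)

lemma pow_cardFactors_le_self {c n : ℕ} (hn : n ≠ 0) (h : ∀ p, p.Prime → p ∣ n → c ≤ p) :
    c ^ Ω n ≤ n := by
  induction n using Nat.recOnMul with
  | zero => exact absurd rfl hn
  | one => simp
  | prime p hp => simpa [ArithmeticFunction.cardFactors_apply_prime hp] using h p hp dvd_rfl
  | mul a b iha ihb =>
    obtain ⟨ha, hb⟩ := mul_ne_zero_iff.1 hn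
    rw [ArithmeticFunction.cardFactors_mul ha hb, pow_add]
    exact Nat.mul_le_mul (iha ha fun p hp hd => h p hp (hd.mul_right b))
      (ihb hb fun p hp hd => h p hp (hd.mul_left a))

lemma pow_cardFactors_le_sqrt_sqrt {c n : ℕ} (hn : n ≠ 0)
    (h : ∀ p, p.Prime → p ∣ n → c ^ 4 ≤ p) : (c : ℝ) ^ Ω n ≤ √√n := by
  refine Real.le_sqrt_of_sq_le (Real.le_sqrt_of_sq_le ?_)
  calc (((c : ℝ) ^ Ω n) ^ 2) ^ 2 = ((c ^ 4) ^ Ω n : ℕ) := by push_cast; ring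
    _ ≤ n := by exact_mod_cast pow_cardFactors_le_self hn h

/-- The integers `n` with `1 ≤ n ≤ Z` that are coprime to `B`. -/
def coprimesUpTo (B Z : ℕ) : Finset ℕ := {n ∈ Icc 1 Z | n.Coprime B}

lemma mem_coprimesUpTo {B Z n : ℕ} :
    n ∈ coprimesUpTo B Z ↔ (1 ≤ n ∧ n ≤ Z) ∧ n.Coprime B := by
  simp [coprimesUpTo]

lemma mem_coprimesUpTo_of_dvd {B Z d n : ℕ} (hn : n ∈ coprimesUpTo B Z) (hd : d ∣ n) :
    d ∈ coprimesUpTo B Z := by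
  obtain ⟨⟨hn1, hnZ⟩, hcop⟩ := mem_coprimesUpTo.1 hn
  exact mem_coprimesUpTo.2 ⟨⟨Nat.pos_of_dvd_of_pos hd hn1, (Nat.le_of_dvd hn1 hd).trans hnZ⟩,
    hcop.coprime_dvd_left hd⟩

/-- The sum of `j ^ Ω(n) / n` over the `n ≤ Z` coprime to `B`, a version of the truncated `j`-fold
divisor sum `∑ d_j(n) / n` that majorizes it and is easier to handle. -/
noncomputable def coprimeSum (j B Z : ℕ) : ℝ := ∑ n ∈ coprimesUpTo B Z, (j : ℝ) ^ Ω n / n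

lemma filter_forall_primeFactors_not_dvd {B : ℕ} (hB : B ≠ 0) (Y : ℕ) :
    {n ∈ Icc 1 Y | ∀ p ∈ B.primeFactors, ¬p ∣ n} = coprimesUpTo B Y := by
  refine filter_congr fun n _ => ?_
  rw [Nat.coprime_comm]
  refine ⟨fun h => Nat.coprime_of_dvd fun p hp hpB =>
    h p (Nat.mem_primeFactors.2 ⟨hp, hpB, hB⟩), fun h p hp hpn => ?_⟩
  obtain ⟨hp, hpB, -⟩ := Nat.mem_primeFactors.1 hp
  exact Nat.not_coprime_of_dvd_of_dvd hp.one_lt hpB hpn h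

lemma totient_div_self_mul_log_le_coprimeSum {B : ℕ} (hB : B ≠ 0) (Y : ℕ) :
    (B.totient : ℝ) / B * Real.log Y ≤ coprimeSum 1 B Y := by
  have log_le_harmonic : Real.log Y ≤ ∑ n ∈ Icc 1 Y, 1 / (n : ℝ) := by
    have h : Real.log Y ≤ (harmonic Y : ℝ) := by simpa using log_le_harmonic_floor (Y : ℝ) (by simp)
    simpa [harmonic_eq_sum_Icc] using h
  calc (B.totient : ℝ) / B * Real.log Y
      ≤ B.totient / B * ∑ n ∈ Icc 1 Y, 1 / (n : ℝ) := by gcongr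
    _ ≤ ∑ n ∈ coprimesUpTo B Y, 1 / (n : ℝ) := by
        rw [totient_div_self B hB, ← filter_forall_primeFactors_not_dvd hB]
        exact prod_mul_sum_one_div_le Y fun p hp => (Nat.prime_of_mem_primeFactors hp).pos
    _ = coprimeSum 1 B Y := by simp [coprimeSum]

lemma coprimeSum_mul_coprimeSum_one_le (j B Z Y : ℕ) :
    coprimeSum j B Z * coprimeSum 1 B Y ≤ coprimeSum (j + 1) B (Z * Y) := by
  calc coprimeSum j B Z * coprimeSum 1 B Y
      ≤ ∑ x ∈ (coprimesUpTo B (Z * Y)).sigma Nat.divisors, (j : ℝ) ^ Ω x.2 / x.1 := by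
        simp only [coprimeSum, sum_mul_sum, ← sum_product']
        refine sum_le_sum_of_injOn (fun x => ⟨x.1 * x.2, x.1⟩) ?_ ?_ ?_ fun _ _ => by positivity
        · rintro ⟨a, b⟩ hab
          simp only [mem_product, mem_coprimesUpTo, mem_sigma, Nat.mem_divisors] at hab ⊢
          obtain ⟨⟨⟨ha1, haZ⟩, ha⟩, ⟨hb1, hbY⟩, hb⟩ := hab
          exact ⟨⟨⟨Nat.mul_pos ha1 hb1, Nat.mul_le_mul haZ hbY⟩, ha.mul_left hb⟩,
            dvd_mul_right _ _, (Nat.mul_pos ha1 hb1).ne'⟩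
        · rintro ⟨a, b⟩ hx ⟨a', b'⟩ _ hxy
          simp only [coe_product, Set.mem_prod, mem_coe, mem_coprimesUpTo] at hx
          obtain ⟨hmul, rfl⟩ : a * b = a' * b' ∧ a = a' := by simpa using hxy
          rw [Nat.eq_of_mul_eq_mul_left hx.1.1.1 hmul]
        · rintro ⟨a, b⟩ _
          simp [← div_eq_mul_inv, div_div]
    _ = ∑ n ∈ coprimesUpTo B (Z * Y), (∑ d ∈ n.divisors, (j : ℝ) ^ Ω d) / n := by
        simp only [sum_sigma, sum_div]
    _ ≤ coprimeSum (j + 1) B (Z * Y) := by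
        refine sum_le_sum fun n hn => ?_
        gcongr
        exact_mod_cast sum_divisors_pow_cardFactors_le j n
          (Nat.one_le_iff_ne_zero.1 (mem_coprimesUpTo.1 hn).1.1)

lemma coprimeSum_one_pow_le (B Y : ℕ) {κ : ℕ} (hκ : 0 < κ) :
    coprimeSum 1 B Y ^ κ ≤ coprimeSum κ B (Y ^ κ) := by
  induction κ, hκ using Nat.le_induction with
  | base => simp
  | succ k hk ih =>
    rw [pow_succ, pow_succ]
    refine le_trans ?_ (coprimeSum_mul_coprimeSum_one_le k B (Y ^ k) Y)
    exact mul_le_mul_of_nonneg_right ih (by unfold coprimeSum; positivity)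

lemma coprimeSum_le_sum_squarefree_mul_sum_sq (κ B R : ℕ) :
    coprimeSum κ B R ≤ (∑ l ∈ coprimesUpTo B R with Squarefree l, (κ : ℝ) ^ Ω l / l) *
      ∑ v ∈ coprimesUpTo B R, (κ : ℝ) ^ (2 * Ω v) / (v : ℝ) ^ 2 := by
  choose a b hab hsq using Nat.sq_mul_squarefree
  rw [sum_mul_sum, ← sum_product']
  refine sum_le_sum_of_injOn (fun n => (a n, b n)) (fun n hn => ?_) (fun x _ y _ hxy => ?_)
    (fun n hn => le_of_eq ?_) fun _ _ => by positivity
  · have ha : a n ∣ n := Dvd.intro_left _ (hab n)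
    have hb : b n ∣ n := (dvd_pow_self _ two_ne_zero).trans (Dvd.intro _ (hab n))
    simp only [mem_product, mem_filter]
    exact ⟨⟨mem_coprimesUpTo_of_dvd hn ha, hsq n⟩, mem_coprimesUpTo_of_dvd hn hb⟩
  · obtain ⟨hxa, hxb⟩ := Prod.mk.inj hxy
    rw [← hab x, ← hab y, hxa, hxb]
  · have hn0 : b n ^ 2 * a n ≠ 0 := by
      rw [hab n]; exact Nat.one_le_iff_ne_zero.1 (mem_coprimesUpTo.1 hn).1.1
    have hΩ : Ω n = Ω (a n) + 2 * Ω (b n) := by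
      conv_lhs => rw [← hab n]
      rw [ArithmeticFunction.cardFactors_mul (left_ne_zero_of_mul hn0) (right_ne_zero_of_mul hn0),
        ArithmeticFunction.cardFactors_pow, add_comm]
    have hn : (n : ℝ) = a n * (b n : ℝ) ^ 2 := by
      conv_lhs => rw [← hab n]
      push_cast; ring
    rw [div_mul_div_comm, ← pow_add, ← hΩ, ← hn]

/-- `τ` bounds the tail `∑_{v > w} v ^ (-3 / 2)`. -/
def TailBound (w : ℕ) (τ : ℝ) : Prop := ∀ R : ℕ, ∑ v ∈ Ioc w R, 1 / ((v : ℝ) * √v) ≤ τ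

lemma TailBound.nonneg {w : ℕ} {τ : ℝ} (hτ : TailBound w τ) : 0 ≤ τ :=
  (sum_nonneg fun _ _ => by positivity).trans (hτ 0)

lemma lt_of_prime_dvd_of_coprime {w B n p : ℕ} (hw : primorial w ∣ B) (hn : n.Coprime B)
    (hp : p.Prime) (hpn : p ∣ n) : w < p := by
  by_contra! hpw
  exact Nat.not_coprime_of_dvd_of_dvd hp.one_lt hpn ((hp.dvd_primorial_iff.2 hpw).trans hw) hn

variable {κ B w : ℕ} {τ : ℝ}

lemma pow_cardFactors_div_sq_le (hw : primorial w ∣ B) (hκw : κ ^ 4 ≤ w) {v : ℕ} (hv1 : 1 ≤ v)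
    (hcop : v.Coprime B) : (κ : ℝ) ^ (2 * Ω v) / (v : ℝ) ^ 2 ≤ 1 / ((v : ℝ) * √v) := by
  have hv0 : (0 : ℝ) < v := by exact_mod_cast hv1
  have pow_le_sqrt : (κ : ℝ) ^ (2 * Ω v) ≤ √v := by
    rw [mul_comm, pow_mul]
    exact (Real.le_sqrt (by positivity) (by positivity)).1 <|
      pow_cardFactors_le_sqrt_sqrt (Nat.one_le_iff_ne_zero.1 hv1) fun p hp hpv =>
        hκw.trans (lt_of_prime_dvd_of_coprime hw hcop hp hpv).le
  rw [div_le_div_iff₀ (by positivity) (by positivity), one_mul]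
  calc (κ : ℝ) ^ (2 * Ω v) * (v * √v) ≤ √v * (v * √v) := by gcongr
    _ = (v : ℝ) ^ 2 := by rw [mul_left_comm, Real.mul_self_sqrt hv0.le, sq]

lemma sum_coprimesUpTo_pow_div_sq_le (hw : primorial w ∣ B) (hκw : κ ^ 4 ≤ w)
    (hτ : TailBound w τ) (R : ℕ) :
    ∑ v ∈ coprimesUpTo B R, (κ : ℝ) ^ (2 * Ω v) / (v : ℝ) ^ 2 ≤ 1 + τ := by
  have lt_of_mem_erase : ∀ v ∈ (coprimesUpTo B R).erase 1, w < v := by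
    intro v hv
    obtain ⟨hv_ne, hv⟩ := mem_erase.1 hv
    obtain ⟨⟨hv1, -⟩, hcop⟩ := mem_coprimesUpTo.1 hv
    obtain ⟨p, hp, hpv⟩ := Nat.exists_prime_and_dvd hv_ne
    exact (lt_of_prime_dvd_of_coprime hw hcop hp hpv).trans_le (Nat.le_of_dvd hv1 hpv)
  calc ∑ v ∈ coprimesUpTo B R, (κ : ℝ) ^ (2 * Ω v) / (v : ℝ) ^ 2
      ≤ ∑ v ∈ insert 1 ((coprimesUpTo B R).erase 1), (κ : ℝ) ^ (2 * Ω v) / (v : ℝ) ^ 2 :=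
        sum_le_sum_of_subset_of_nonneg (subset_insert_iff.2 subset_rfl) fun _ _ _ => by positivity
    _ = 1 + ∑ v ∈ (coprimesUpTo B R).erase 1, (κ : ℝ) ^ (2 * Ω v) / (v : ℝ) ^ 2 := by
        rw [sum_insert (notMem_erase _ _)]; simp
    _ ≤ 1 + ∑ v ∈ Ioc w R, 1 / ((v : ℝ) * √v) := by
        gcongr
        refine sum_le_sum_of_injOn id (fun v hv => ?_) Function.injective_id.injOn
          (fun v hv => ?_) fun _ _ => by positivity
        · exact mem_Ioc.2 ⟨lt_of_mem_erase v hv, (mem_coprimesUpTo.1 (mem_of_mem_erase hv)).1.2⟩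
        · obtain ⟨⟨hv1, -⟩, hcop⟩ := mem_coprimesUpTo.1 (mem_of_mem_erase hv)
          exact pow_cardFactors_div_sq_le hw hκw hv1 hcop
    _ ≤ 1 + τ := by gcongr; exact hτ R

lemma totient_mul_log_pow_le_sum_squarefree (hκ : 0 < κ) (hB : B ≠ 0) (hw : primorial w ∣ B)
    (hκw : κ ^ 4 ≤ w) (hτ : TailBound w τ) (Y : ℕ) :
    ((B.totient : ℝ) / B * Real.log Y) ^ κ ≤
      (∑ l ∈ coprimesUpTo B (Y ^ κ) with Squarefree l, (κ : ℝ) ^ Ω l / l) * (1 + τ) := by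
  calc ((B.totient : ℝ) / B * Real.log Y) ^ κ ≤ coprimeSum 1 B Y ^ κ := by
        gcongr; exact totient_div_self_mul_log_le_coprimeSum hB Y
    _ ≤ coprimeSum κ B (Y ^ κ) := coprimeSum_one_pow_le B Y hκ
    _ ≤ _ := coprimeSum_le_sum_squarefree_mul_sum_sq κ B (Y ^ κ)
    _ ≤ _ := by gcongr; exact sum_coprimesUpTo_pow_div_sq_le hw hκw hτ _

end Density

/-! ### Prime tuples in an arithmetic progression -/

section PrimeTuples

open scoped ArithmeticFunction.Omega

variable {κ Q A B w Y : ℕ} {τ : ℝ} {h : Fin κ → ℕ}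

lemma card_filter_exists_dvd_eq {p : ℕ} (hp : p.Prime) (hQ : ¬p ∣ Q)
    (hne : ∀ i j, i ≠ j → ¬(p : ℤ) ∣ (h i : ℤ) - h j) :
    #{j ∈ range p | ∃ i, p ∣ A + Q * j + h i} = κ := by
  have : Fact p.Prime := ⟨hp⟩
  have hQ0 : (Q : ZMod p) ≠ 0 := by rwa [Ne, ZMod.natCast_eq_zero_iff]
  let root (i : Fin κ) : ZMod p := -((A : ZMod p) + h i) * (Q : ZMod p)⁻¹
  have dvd_iff (i : Fin κ) (j : ℕ) : p ∣ A + Q * j + h i ↔ (j : ZMod p) = root i := by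
    rw [← ZMod.natCast_eq_zero_iff, eq_mul_inv_iff_mul_eq₀ hQ0, eq_neg_iff_add_eq_zero]
    push_cast
    ring_nf
  have root_injective : Function.Injective root := fun i j hij => by
    by_contra hcon
    refine hne i j hcon ((ZMod.intCast_zmod_eq_zero_iff_dvd _ _).1 ?_)
    push_cast
    linear_combination -mul_right_cancel₀ (inv_ne_zero hQ0) hij
  have filter_eq : {j ∈ range p | ∃ i, p ∣ A + Q * j + h i} =
      univ.image (ZMod.val ∘ root) := by
    ext j
    simp only [dvd_iff, mem_filter, mem_range, mem_image, mem_univ, true_and, Function.comp_apply]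
    constructor
    · rintro ⟨hj, i, hi⟩
      exact ⟨i, by rw [← hi, ZMod.val_natCast, Nat.mod_eq_of_lt hj]⟩
    · rintro ⟨i, rfl⟩
      exact ⟨ZMod.val_lt _, i, ZMod.natCast_zmod_val _⟩
  rw [filter_eq, card_image_of_injective _ ((ZMod.val_injective p).comp root_injective), card_univ,
    Fintype.card_fin]

lemma cardFactors_eq_card_primeFactors {l : ℕ} (hl : Squarefree l) : Ω l = #l.primeFactors := by
  rw [← (ArithmeticFunction.cardDistinctFactors_eq_cardFactors_iff_squarefree hl.ne_zero).2 hl,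
    ArithmeticFunction.cardDistinctFactors_apply, Nat.primeFactors, List.card_toFinset]

/-- The sets of prime factors of the squarefree integers `l ≤ R` coprime to `B`, which index the
test functions of Selberg's sieve. -/
def siftingSets (B R : ℕ) : Finset (Finset ℕ) :=
  {l ∈ coprimesUpTo B R | Squarefree l}.image Nat.primeFactors

lemma sum_siftingSets {α : Type*} [AddCommMonoid α] (B R : ℕ) (f : Finset ℕ → α) :
    ∑ t ∈ siftingSets B R, f t = ∑ l ∈ coprimesUpTo B R with Squarefree l, f l.primeFactors := by
  refine sum_image fun x hx y hy hxy => ?_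
  rw [← Nat.prod_primeFactors_of_squarefree (mem_filter.1 hx).2,
    ← Nat.prod_primeFactors_of_squarefree (mem_filter.1 hy).2, hxy]

lemma subset_of_mem_siftingSets {R : ℕ} {t : Finset ℕ} (ht : t ∈ siftingSets B R) :
    t ⊆ {p ∈ coprimesUpTo B R | p.Prime} := by
  intro p hp
  obtain ⟨l, hl, rfl⟩ := mem_image.1 ht
  exact mem_filter.2 ⟨mem_coprimesUpTo_of_dvd (mem_filter.1 hl).1 (Nat.dvd_of_mem_primeFactors hp),
    Nat.prime_of_mem_primeFactors hp⟩

lemma sum_squarefree_le_sum_siftingSets (hw : primorial w ∣ B) (hκw : κ ≤ w) (R : ℕ) :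
    ∑ l ∈ coprimesUpTo B R with Squarefree l, (κ : ℝ) ^ Ω l / l ≤
      ∑ t ∈ siftingSets B R, ∏ p ∈ t, (κ : ℝ) / (p - κ) := by
  rw [sum_siftingSets]
  refine sum_le_sum fun l hl => ?_
  obtain ⟨hl, hsq⟩ := mem_filter.1 hl
  have cast_eq : (l : ℝ) = ∏ p ∈ l.primeFactors, (p : ℝ) := by
    rw [← Nat.cast_prod, Nat.prod_primeFactors_of_squarefree hsq]
  rw [cardFactors_eq_card_primeFactors hsq, cast_eq, ← prod_const, ← prod_div_distrib]
  refine prod_le_prod (fun p _ => by positivity) fun p hp => ?_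
  have hwp : w < p := lt_of_prime_dvd_of_coprime hw (mem_coprimesUpTo.1 hl).2
    (Nat.prime_of_mem_primeFactors hp) (Nat.dvd_of_mem_primeFactors hp)
  have hκp : (κ : ℝ) < p := by exact_mod_cast hκw.trans_lt hwp
  exact div_le_div_of_nonneg_left κ.cast_nonneg (by linarith) (by linarith [κ.cast_nonneg (α := ℝ)])

lemma sum_siftingSets_pow_card_le {c : ℕ} (hw : primorial w ∣ B) (hcw : c ^ 4 ≤ w) (R : ℕ) :
    ∑ t ∈ siftingSets B R, (c : ℝ) ^ #t ≤ R * √√R := by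
  have term_le : ∀ t ∈ siftingSets B R, (c : ℝ) ^ #t ≤ √√R := by
    intro t ht
    obtain ⟨l, hl, rfl⟩ := mem_image.1 ht
    obtain ⟨hl, hsq⟩ := mem_filter.1 hl
    obtain ⟨⟨-, hlR⟩, hcop⟩ := mem_coprimesUpTo.1 hl
    rw [← cardFactors_eq_card_primeFactors hsq]
    calc (c : ℝ) ^ Ω l ≤ √√l := pow_cardFactors_le_sqrt_sqrt hsq.ne_zero fun p hp hpl =>
          hcw.trans (lt_of_prime_dvd_of_coprime hw hcop hp hpl).le
      _ ≤ √√R := by gcongr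
  have card_le : #(siftingSets B R) ≤ R :=
    card_image_le.trans <| (card_filter_le _ _).trans <| (card_filter_le _ _).trans (by simp)
  calc ∑ t ∈ siftingSets B R, (c : ℝ) ^ #t ≤ #(siftingSets B R) * √√R := by
        simpa using sum_le_sum term_le
    _ ≤ R * √√R := by gcongr

lemma card_filter_forall_not_dvd_le (hκ : 0 < κ) (hY : 1 < Y) (hw : primorial w ∣ B)
    (hκw : (2 * κ) ^ 4 ≤ w) (hQB : Q ∣ B) (hhB : ∀ i j, i ≠ j → (h i : ℤ) - h j ∣ B) (A J : ℕ) :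
    (#{j ∈ range J | ∀ p ∈ {p ∈ coprimesUpTo B (Y ^ κ) | p.Prime},
          ¬∃ i, p ∣ A + Q * j + h i} : ℝ) ≤
      J / ∑ t ∈ siftingSets B (Y ^ κ), ∏ p ∈ t, (κ : ℝ) / (p - κ) +
        2 * (∑ t ∈ siftingSets B (Y ^ κ), (2 * κ : ℝ) ^ #t) ^ 2 := by
  have prime_of_mem {p} (hp : p ∈ {p ∈ coprimesUpTo B (Y ^ κ) | p.Prime}) : p.Prime :=
    (mem_filter.1 hp).2
  have not_dvd {p} (hp : p ∈ {p ∈ coprimesUpTo B (Y ^ κ) | p.Prime}) : ¬p ∣ B :=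
    (prime_of_mem hp).coprime_iff_not_dvd.1 (mem_coprimesUpTo.1 (mem_filter.1 hp).1).2
  refine selberg_sieve (ω := fun p j => ∃ i, p ∣ A + Q * j + h i) hκ (fun p hp => ?_)
    (fun p hp q hq hpq => ?_) (fun p _ j => ?_) (fun p hp => ?_)
    (fun t ht => subset_of_mem_siftingSets ht) ?_ J
  · exact (Nat.le_self_pow four_ne_zero _).trans <| hκw.trans
      (lt_of_prime_dvd_of_coprime hw (mem_coprimesUpTo.1 (mem_filter.1 hp).1).2
        (prime_of_mem hp) dvd_rfl).le
  · exact (Nat.coprime_primes (prime_of_mem hp) (prime_of_mem hq)).2 hpq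
  · simp only [eq_iff_iff]
    refine exists_congr fun i => ?_
    rw [show A + Q * (j + p) + h i = A + Q * j + h i + p * Q by ring]
    exact (Nat.dvd_add_iff_left (dvd_mul_right p Q)).symm
  · refine card_filter_exists_dvd_eq (prime_of_mem hp) (fun hd => not_dvd hp (hd.trans hQB))
      fun i j hij hd => not_dvd hp ?_
    exact_mod_cast hd.trans (hhB i j hij)
  · refine mem_image.2 ⟨1, mem_filter.2 ⟨mem_coprimesUpTo.2 ?_, squarefree_one⟩, by simp⟩
    exact ⟨⟨le_rfl, Nat.one_le_pow _ _ (by omega)⟩, Nat.coprime_one_left B⟩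

theorem card_prime_tuples_le (hκ : 0 < κ) (hY : 1 < Y) (hB : B ≠ 0) (hw : primorial w ∣ B)
    (hκw : (2 * κ) ^ 4 ≤ w) (hτ : TailBound w τ) (hQB : Q ∣ B)
    (hhB : ∀ i j, i ≠ j → (h i : ℤ) - h j ∣ B) {J : ℕ} {S : Finset ℕ} (hSJ : S ⊆ range J)
    (hS : ∀ j ∈ S, ∀ i, (A + Q * j + h i).Prime ∧ Y ^ κ < A + Q * j + h i) :
    (#S : ℝ) ≤ J * (1 + τ) * ((B : ℝ) / B.totient) ^ κ / Real.log Y ^ κ +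
      2 * (((Y : ℝ) ^ κ) ^ 2 * √((Y : ℝ) ^ κ)) := by
  have hκw' : κ ^ 4 ≤ w := (Nat.pow_le_pow_left (by omega) 4).trans hκw
  have hlog : 0 < Real.log Y := Real.log_pos (by exact_mod_cast hY)
  have hτ0 : 0 < 1 + τ := by linarith [hτ.nonneg]
  set L := ∑ t ∈ siftingSets B (Y ^ κ), ∏ p ∈ t, (κ : ℝ) / (p - κ)
  have density_le : ((B.totient : ℝ) / B * Real.log Y) ^ κ ≤ L * (1 + τ) :=
    (totient_mul_log_pow_le_sum_squarefree hκ hB hw hκw' hτ Y).trans <| by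
      gcongr
      exact sum_squarefree_le_sum_siftingSets hw ((Nat.le_self_pow four_ne_zero κ).trans hκw') _
  have subset_sifted : S ⊆ {j ∈ range J | ∀ p ∈ {p ∈ coprimesUpTo B (Y ^ κ) | p.Prime},
      ¬∃ i, p ∣ A + Q * j + h i} := by
    refine fun j hj => mem_filter.2 ⟨hSJ hj, fun p hp ⟨i, hi⟩ => ?_⟩
    obtain ⟨hp, hp_prime⟩ := mem_filter.1 hp
    have hlt := (hS j hj i).2
    rw [← (Nat.prime_dvd_prime_iff_eq hp_prime (hS j hj i).1).1 hi] at hlt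
    exact hlt.not_ge (mem_coprimesUpTo.1 hp).1.2
  calc (#S : ℝ) ≤ _ := by exact_mod_cast card_le_card subset_sifted
    _ ≤ J / L + 2 * (∑ t ∈ siftingSets B (Y ^ κ), (2 * κ : ℝ) ^ #t) ^ 2 :=
        card_filter_forall_not_dvd_le hκ hY hw hκw hQB hhB A J
    _ ≤ J / (((B.totient : ℝ) / B * Real.log Y) ^ κ / (1 + τ)) +
          2 * ((Y : ℝ) ^ κ * √√((Y : ℝ) ^ κ)) ^ 2 := by
        gcongr
        · exact (div_le_iff₀ hτ0).2 density_le
        · exact_mod_cast sum_siftingSets_pow_card_le hw hκw (Y ^ κ)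
    _ = _ := by
        rw [mul_pow _ √√_, Real.sq_sqrt (Real.sqrt_nonneg _), mul_pow, div_pow, div_pow]
        field_simp

end PrimeTuples

/-! ### The singular series -/

section SingularSeries

/-- The factor by which the ratio `n / φ(n)` grows when `Q` is replaced by `Q * n`, namely the
product of `(1 - 1 / p)⁻¹` over the primes dividing `n` but not `Q`. -/
noncomputable def relRatio (Q n : ℕ) : ℝ :=
  ∏ p ∈ n.primeFactors \ Q.primeFactors, (1 - (p : ℝ)⁻¹)⁻¹

variable {Q n w H : ℕ}

lemma one_le_inv_one_sub_inv {p : ℕ} (hp : p.Prime) : 1 ≤ (1 - (p : ℝ)⁻¹)⁻¹ := by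
  have hp1 : (p : ℝ)⁻¹ < 1 := inv_lt_one_of_one_lt₀ (by exact_mod_cast hp.one_lt)
  exact (one_le_inv₀ (sub_pos.2 hp1)).2 (sub_le_self _ (by positivity))

lemma one_le_relRatio (Q n : ℕ) : 1 ≤ relRatio Q n :=
  Finset.one_le_prod fun _ hp =>
    one_le_inv_one_sub_inv (Nat.prime_of_mem_primeFactors (mem_sdiff.1 hp).1)

lemma relRatio_mul_le {a b : ℕ} (ha : a ≠ 0) (hb : b ≠ 0) :
    relRatio Q (a * b) ≤ relRatio Q a * relRatio Q b := by
  have hone : ∀ p ∈ (a.primeFactors \ Q.primeFactors) ∩ (b.primeFactors \ Q.primeFactors),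
      1 ≤ (1 - (p : ℝ)⁻¹)⁻¹ := fun p hp =>
    one_le_inv_one_sub_inv (Nat.prime_of_mem_primeFactors (mem_sdiff.1 (mem_inter.1 hp).1).1)
  calc relRatio Q (a * b)
      ≤ relRatio Q (a * b) * ∏ p ∈ (a.primeFactors \ Q.primeFactors) ∩
          (b.primeFactors \ Q.primeFactors), (1 - (p : ℝ)⁻¹)⁻¹ :=
        le_mul_of_one_le_right (zero_le_one.trans (one_le_relRatio Q _)) (one_le_prod hone)
    _ = relRatio Q a * relRatio Q b := by
        simp only [relRatio, Nat.primeFactors_mul ha hb, union_sdiff_distrib, prod_union_inter]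

lemma relRatio_prod_le {ι : Type*} {s : Finset ι} {f : ι → ℕ} (hf : ∀ i ∈ s, f i ≠ 0) :
    relRatio Q (∏ i ∈ s, f i) ≤ ∏ i ∈ s, relRatio Q (f i) := by
  classical
  induction s using Finset.induction_on with
  | empty => simp [relRatio]
  | insert i s hi ih =>
    have hs : ∀ j ∈ s, f j ≠ 0 := fun j hj => hf j (mem_insert_of_mem hj)
    rw [prod_insert hi, prod_insert hi]
    exact (relRatio_mul_le (hf i (mem_insert_self i s)) (prod_ne_zero_iff.2 hs)).trans
      (mul_le_mul_of_nonneg_left (ih hs) (zero_le_one.trans (one_le_relRatio Q _)))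

lemma mul_div_totient_mul (hQ : Q ≠ 0) (hn : n ≠ 0) :
    ((Q * n : ℕ) : ℝ) / (Q * n).totient = Q / Q.totient * relRatio Q n := by
  rw [← inv_div, ← inv_div (Q.totient : ℝ), totient_div_self _ (mul_ne_zero hQ hn),
    totient_div_self _ hQ, Nat.primeFactors_mul hQ hn, ← union_sdiff_self_eq_union,
    prod_union disjoint_sdiff, mul_inv, relRatio, prod_inv_distrib]

lemma prod_le_one_add_sum_pow_sub_one {ι : Type*} {s : Finset ι} {y : ι → ℝ} {N : ℕ}
    (hN : #s ≤ N) (hy : ∀ i ∈ s, 1 ≤ y i) : ∏ i ∈ s, y i ≤ 1 + ∑ i ∈ s, (y i ^ N - 1) := by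
  rcases s.eq_empty_or_nonempty with rfl | hs
  · simp
  obtain ⟨i₀, hi₀, hmax⟩ := s.exists_max_image y hs
  calc ∏ i ∈ s, y i ≤ ∏ _i ∈ s, y i₀ :=
        prod_le_prod (fun i hi => zero_le_one.trans (hy i hi)) hmax
    _ = y i₀ ^ #s := prod_const _
    _ ≤ y i₀ ^ N := pow_le_pow_right₀ (hy i₀ hi₀) hN
    _ = 1 + (y i₀ ^ N - 1) := by ring
    _ ≤ 1 + ∑ i ∈ s, (y i ^ N - 1) := by
        gcongr
        exact single_le_sum (f := fun i => y i ^ N - 1)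
          (fun i hi => sub_nonneg.2 (one_le_pow₀ (hy i hi))) hi₀

lemma inv_one_sub_inv_pow_le {x : ℝ} {D : ℕ} (hx : 1 < x) (hD : 4 * (D : ℝ) ^ 2 ≤ x) :
    (1 - x⁻¹)⁻¹ ^ D ≤ 1 + 1 / √x := by
  have hx1 : x⁻¹ < 1 := inv_lt_one_of_one_lt₀ hx
  have hsqrt : 1 ≤ √x := Real.one_le_sqrt.2 hx.le
  have hsq : √x * √x = x := Real.mul_self_sqrt (by linarith)
  have hDsqrt : 2 * (D : ℝ) ≤ √x := Real.le_sqrt_of_sq_le (by linarith)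
  rw [inv_pow, inv_le_iff_one_le_mul₀ (pow_pos (sub_pos.2 hx1) D)]
  have hexpand : (1 + 1 / √x) * (1 + D * -(√x * √x)⁻¹) - 1 =
      (√x * √x - D * √x - D) / (√x * √x * √x) := by
    field_simp
    ring
  have hnonneg : 0 ≤ (√x * √x - D * √x - D) / (√x * √x * √x) :=
    div_nonneg (by nlinarith) (by positivity)
  calc 1 ≤ (1 + 1 / √x) * (1 + D * -x⁻¹) := by rw [hsq] at hexpand hnonneg; linarith
    _ ≤ (1 + 1 / √x) * (1 - x⁻¹) ^ D := by
        rw [sub_eq_add_neg]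
        gcongr
        exact one_add_mul_le_pow (by linarith) D

/-- The possible moduli `d` in the expansion of the singular series: those in `(w, H]` coprime
to `Q`. -/
def seriesModuli (w H Q : ℕ) : Finset ℕ := {d ∈ Ioc w H | d.Coprime Q}

lemma prod_mem_seriesModuli (hQ : Q ≠ 0) (hw : primorial w ∣ Q) (hn : n ≠ 0) (hnH : n ≤ H)
    {t : Finset ℕ} (ht : t ⊆ n.primeFactors \ Q.primeFactors) (hne : t.Nonempty) :
    ∏ p ∈ t, p ∈ {d ∈ seriesModuli w H Q | d ∣ n} := by
  have hprime : ∀ p ∈ t, p.Prime := fun p hp =>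
    Nat.prime_of_mem_primeFactors (mem_sdiff.1 (ht hp)).1
  have hcop : ∀ p ∈ t, p.Coprime Q := fun p hp => ((hprime p hp).coprime_iff_not_dvd).2
    fun hpQ => (mem_sdiff.1 (ht hp)).2 (Nat.mem_primeFactors.2 ⟨hprime p hp, hpQ, hQ⟩)
  have hdvd : ∏ p ∈ t, p ∣ n := prod_primes_dvd n (fun p hp => (hprime p hp).prime)
    fun p hp => Nat.dvd_of_mem_primeFactors (mem_sdiff.1 (ht hp)).1
  obtain ⟨p, hp⟩ := hne
  have hwp : w < p := lt_of_prime_dvd_of_coprime hw (hcop p hp) (hprime p hp) dvd_rfl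
  have hple : p ≤ ∏ p ∈ t, p :=
    Nat.le_of_dvd (prod_pos fun p hp => (hprime p hp).pos) (dvd_prod_of_mem _ hp)
  simp only [seriesModuli, mem_filter, mem_Ioc]
  exact ⟨⟨⟨hwp.trans_le hple, (Nat.le_of_dvd (Nat.pos_of_ne_zero hn) hdvd).trans hnH⟩,
    Nat.Coprime.prod_left hcop⟩, hdvd⟩

lemma relRatio_pow_le {D : ℕ} (hQ : Q ≠ 0) (hw : primorial w ∣ Q) (hD : 4 * D ^ 2 ≤ w)
    (hn : n ≠ 0) (hnH : n ≤ H) :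
    relRatio Q n ^ D ≤ 1 + ∑ d ∈ seriesModuli w H Q with d ∣ n, 1 / √(d : ℝ) := by
  set T := n.primeFactors \ Q.primeFactors
  have hprime : ∀ p ∈ T, p.Prime := fun p hp => Nat.prime_of_mem_primeFactors (mem_sdiff.1 hp).1
  have hlt : ∀ p ∈ T, w < p := fun p hp => by
    have := prod_mem_seriesModuli hQ hw hn hnH (singleton_subset_iff.2 hp)
      (singleton_nonempty p)
    simp only [prod_singleton, seriesModuli, mem_filter, mem_Ioc] at this
    exact this.1.1.1
  calc relRatio Q n ^ D = ∏ p ∈ T, (1 - (p : ℝ)⁻¹)⁻¹ ^ D := by rw [relRatio, prod_pow]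
    _ ≤ ∏ p ∈ T, (1 + 1 / √(p : ℝ)) := by
        refine prod_le_prod (fun p hp => ?_) fun p hp => ?_
        · exact pow_nonneg (zero_le_one.trans (one_le_inv_one_sub_inv (hprime p hp))) D
        · exact inv_one_sub_inv_pow_le (by exact_mod_cast (hprime p hp).one_lt)
            (by exact_mod_cast hD.trans (hlt p hp).le)
    _ = ∑ t ∈ T.powerset, 1 / √((∏ p ∈ t, p : ℕ) : ℝ) := by
        rw [prod_one_add]
        refine sum_congr rfl fun t _ => ?_
        rw [Nat.cast_prod, Real.sqrt_prod _ (fun _ _ => by positivity), prod_div_distrib,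
          prod_const_one]
    _ = 1 + ∑ t ∈ T.powerset.erase ∅, 1 / √((∏ p ∈ t, p : ℕ) : ℝ) := by
        rw [← add_sum_erase _ _ (empty_mem_powerset T)]
        simp
    _ ≤ 1 + ∑ d ∈ seriesModuli w H Q with d ∣ n, 1 / √(d : ℝ) := by
        gcongr
        refine sum_le_sum_of_injOn (fun t : Finset ℕ => ∏ p ∈ t, p) (fun t ht => ?_)
          (fun s hs t ht hst => ?_) (fun _ _ => le_rfl) fun _ _ => by positivity
        · rw [mem_erase, mem_powerset] at ht
          exact prod_mem_seriesModuli hQ hw hn hnH ht.2 (nonempty_iff_ne_empty.2 ht.1)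
        · rw [mem_coe, mem_erase, mem_powerset] at hs ht
          rw [← Nat.primeFactors_prod fun p hp => hprime p (hs.2 hp),
            ← Nat.primeFactors_prod fun p hp => hprime p (ht.2 hp)]
          exact congrArg Nat.primeFactors hst

/-- The index pairs `i < j`. -/
def increasingPairs (m : ℕ) : Finset (Fin m × Fin m) := {x | x.1 < x.2}

lemma card_increasingPairs_le (m : ℕ) : #(increasingPairs m) ≤ m ^ 2 :=
  (card_le_univ _).trans (by simp [sq])

/-- The modulus `Q * ∏_{i < j} (h j - h i)` governing the singular series of the tuple `h`; the
truncated subtractions are genuine for monotone `h`. -/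
def tupleModulus {m : ℕ} (Q : ℕ) (h : Fin m → ℕ) : ℕ :=
  Q * ∏ x ∈ increasingPairs m, (h x.2 - h x.1)

variable {m : ℕ} {h : Fin m → ℕ}

lemma sub_ne_zero_of_mem_increasingPairs (hh : StrictMono h) {x : Fin m × Fin m}
    (hx : x ∈ increasingPairs m) : h x.2 - h x.1 ≠ 0 :=
  (Nat.sub_pos_of_lt (hh (mem_filter.1 hx).2)).ne'

lemma tupleModulus_ne_zero (hQ : Q ≠ 0) (hh : StrictMono h) : tupleModulus Q h ≠ 0 :=
  mul_ne_zero hQ (prod_ne_zero_iff.2 fun _ => sub_ne_zero_of_mem_increasingPairs hh)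

lemma sub_dvd_tupleModulus (hh : StrictMono h) {i j : Fin m} (hij : i ≠ j) :
    (h i : ℤ) - h j ∣ tupleModulus Q h := by
  wlog hlt : j < i generalizing i j
  · rw [← neg_sub, neg_dvd]
    exact this hij.symm (lt_of_le_of_ne (not_lt.1 hlt) hij)
  have hdvd : h i - h j ∣ tupleModulus Q h :=
    (dvd_prod_of_mem (fun x : Fin m × Fin m => h x.2 - h x.1)
      (mem_filter.2 ⟨mem_univ (j, i), hlt⟩)).mul_left Q
  rw [← Nat.cast_sub (hh hlt).le]
  exact_mod_cast hdvd

/-- A divisor sum majorising the singular series of the tuple `h` relative to `Q`. -/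
noncomputable def seriesMajorant {m : ℕ} (w H Q : ℕ) (h : Fin m → ℕ) : ℝ :=
  1 + ∑ x ∈ increasingPairs m, ∑ d ∈ seriesModuli w H Q with d ∣ h x.2 - h x.1, 1 / √(d : ℝ)

lemma seriesMajorant_nonneg {m : ℕ} (w H Q : ℕ) (h : Fin m → ℕ) : 0 ≤ seriesMajorant w H Q h := by
  unfold seriesMajorant
  positivity

theorem tupleModulus_div_totient_pow_le (hQ : Q ≠ 0) (hw : primorial w ∣ Q)
    (hmw : 4 * (m * m ^ 2) ^ 2 ≤ w) (hh : StrictMono h) (hH : ∀ i, h i ≤ H) :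
    ((tupleModulus Q h : ℝ) / (tupleModulus Q h).totient) ^ m ≤
      ((Q : ℝ) / Q.totient) ^ m * seriesMajorant w H Q h := by
  set gap : Fin m × Fin m → ℕ := fun x => h x.2 - h x.1
  have hgap : ∀ x ∈ increasingPairs m, gap x ≠ 0 := fun x => sub_ne_zero_of_mem_increasingPairs hh
  have hone : ∀ x ∈ increasingPairs m, 1 ≤ relRatio Q (gap x) ^ m :=
    fun x _ => one_le_pow₀ (one_le_relRatio Q _)
  rw [tupleModulus, mul_div_totient_mul hQ (prod_ne_zero_iff.2 hgap), mul_pow]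
  gcongr
  calc relRatio Q (∏ x ∈ increasingPairs m, gap x) ^ m
      ≤ (∏ x ∈ increasingPairs m, relRatio Q (gap x)) ^ m :=
        pow_le_pow_left₀ (zero_le_one.trans (one_le_relRatio Q _)) (relRatio_prod_le hgap) m
    _ = ∏ x ∈ increasingPairs m, relRatio Q (gap x) ^ m := (prod_pow _ _ _).symm
    _ ≤ 1 + ∑ x ∈ increasingPairs m, ((relRatio Q (gap x) ^ m) ^ (m ^ 2) - 1) :=
        prod_le_one_add_sum_pow_sub_one (card_increasingPairs_le m) hone
    _ ≤ seriesMajorant w H Q h := by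
        unfold seriesMajorant
        gcongr with x hx
        rw [← pow_mul, sub_le_iff_le_add']
        exact relRatio_pow_le hQ hw hmw (hgap x hx) ((Nat.sub_le _ _).trans (hH _))

end SingularSeries

/-! ### Averaging the singular series over gap vectors -/

section GapSums

variable {k Q w H d : ℕ} {s τ : ℝ}

lemma inv_one_sub_exp_neg_le {y : ℝ} (hy : 0 < y) : (1 - Real.exp (-y))⁻¹ ≤ 1 + 1 / y := by
  have hexp : Real.exp (-y) ≤ (1 + y)⁻¹ := by
    rw [Real.exp_neg]
    exact inv_anti₀ (by positivity) (by linarith [Real.add_one_le_exp y])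
  calc (1 - Real.exp (-y))⁻¹ ≤ (1 - (1 + y)⁻¹)⁻¹ := by
        refine inv_anti₀ (sub_pos.2 (inv_lt_one_of_one_lt₀ (by linarith))) (by linarith)
    _ = 1 + 1 / y := by
        have hsub : 1 - (1 + y)⁻¹ = y / (1 + y) := by
          field_simp
          ring
        rw [hsub, inv_div, add_div, div_self hy.ne', add_comm]

lemma sum_exp_neg_le_of_modEq (hs : 0 < s) (hd : 0 < d) {T : Finset ℕ}
    (hT : ∀ b ∈ T, ∀ c ∈ T, b ≡ c [MOD d]) :
    ∑ b ∈ T, Real.exp (-(s * b)) ≤ 1 + 1 / (s * d) := by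
  have hsd : 0 < s * d := by positivity
  set r := Real.exp (-(s * d)) with hr
  have hr1 : r < 1 := Real.exp_lt_one_iff.2 (neg_neg_of_pos hsd)
  calc ∑ b ∈ T, Real.exp (-(s * b)) ≤ ∑ n ∈ T.image (· / d), r ^ n := by
        refine sum_le_sum_of_injOn (· / d) (fun b hb => mem_image_of_mem _ hb)
          (fun b hb c hc hbc => ?_) (fun b _ => ?_) fun _ _ => by positivity
        · rw [← Nat.div_add_mod b d, ← Nat.div_add_mod c d, hT b hb c hc]
          exact congrArg (d * · + c % d) hbc
        · rw [hr, ← Real.exp_nat_mul, Real.exp_le_exp]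
          have hle : (d : ℝ) * (b / d : ℕ) ≤ b := by exact_mod_cast Nat.mul_div_le b d
          nlinarith
    _ ≤ ∑' n, r ^ n :=
        (summable_geometric_of_lt_one (Real.exp_nonneg _) hr1).sum_le_tsum _
          fun _ _ => by positivity
    _ = (1 - r)⁻¹ := tsum_geometric_of_lt_one (Real.exp_nonneg _) hr1
    _ ≤ 1 + 1 / (s * d) := inv_one_sub_exp_neg_le hsd

/-- The weight `e^{-s (g₁ + ⋯ + g_k)}` of a gap vector `g`. -/
noncomputable def gapWeight (s : ℝ) (g : Fin k → ℕ) : ℝ := ∏ l, Real.exp (-(s * g l))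

lemma gapWeight_nonneg (s : ℝ) (g : Fin k → ℕ) : 0 ≤ gapWeight s g :=
  prod_nonneg fun _ _ => (Real.exp_pos _).le

lemma gapWeight_insertNth (s : ℝ) (l : Fin (k + 1)) (b : ℕ) (g : Fin k → ℕ) :
    gapWeight s (l.insertNth b g) = gapWeight s g * Real.exp (-(s * b)) := by
  simp [gapWeight, Fin.prod_univ_succAbove _ l, mul_comm]

lemma sum_gapWeight_le (hs : 0 < s) (hQ : 0 < Q) {t : Fin k → Finset ℕ}
    (ht : ∀ l, ∀ b ∈ t l, ∀ c ∈ t l, b ≡ c [MOD Q]) :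
    ∑ g ∈ Fintype.piFinset t, gapWeight s g ≤ (1 + 1 / (s * Q)) ^ k := by
  calc ∑ g ∈ Fintype.piFinset t, gapWeight s g
      = ∏ l, ∑ b ∈ t l, Real.exp (-(s * b)) :=
        (prod_univ_sum t fun _ b => Real.exp (-(s * b))).symm
    _ ≤ ∏ _l : Fin k, (1 + 1 / (s * Q)) :=
        prod_le_prod (fun _ _ => sum_nonneg fun _ _ => (Real.exp_pos _).le)
          fun l _ => sum_exp_neg_le_of_modEq hs hQ (ht l)
    _ = (1 + 1 / (s * Q)) ^ k := by simp

lemma sum_piFinset_eq_sum_insertNth {M : Type*} [AddCommMonoid M] (l : Fin (k + 1))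
    (t : Fin (k + 1) → Finset ℕ) (f : (Fin (k + 1) → ℕ) → M) :
    ∑ g ∈ Fintype.piFinset t, f g =
      ∑ g ∈ Fintype.piFinset (l.removeNth t), ∑ b ∈ t l, f (l.insertNth b g) := by
  have hmap := filter_piFinset_eq_map_insertNthEquiv (p := l) t fun _ => True
  simp only [filter_true] at hmap
  rw [hmap, sum_map, sum_product_right]
  rfl

lemma sum_gapWeight_filter_le (hs : 0 < s) (hQ : 0 < Q) (hd : 0 < d) (hdQ : d.Coprime Q)
    {t : Fin (k + 1) → Finset ℕ} (ht : ∀ l, ∀ b ∈ t l, ∀ c ∈ t l, b ≡ c [MOD Q])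
    (l : Fin (k + 1)) (P : (Fin (k + 1) → ℕ) → Prop) [DecidablePred P]
    (hP : ∀ g b c, P (l.insertNth b g) → P (l.insertNth c g) → b ≡ c [MOD d]) :
    ∑ g ∈ Fintype.piFinset t with P g, gapWeight s g ≤
      (1 + 1 / (s * Q)) ^ k * (1 + 1 / (s * (Q * d : ℕ))) := by
  calc ∑ g ∈ Fintype.piFinset t with P g, gapWeight s g
      = ∑ g ∈ Fintype.piFinset (l.removeNth t), gapWeight s g *
          ∑ b ∈ t l with P (l.insertNth b g), Real.exp (-(s * b)) := by
        rw [sum_filter, sum_piFinset_eq_sum_insertNth l]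
        simp only [gapWeight_insertNth, sum_filter, mul_sum, mul_ite, mul_zero]
    _ ≤ ∑ g ∈ Fintype.piFinset (l.removeNth t), gapWeight s g * (1 + 1 / (s * (Q * d : ℕ))) := by
        refine sum_le_sum fun g _ => mul_le_mul_of_nonneg_left ?_ (gapWeight_nonneg s g)
        refine sum_exp_neg_le_of_modEq hs (by positivity) fun b hb c hc => ?_
        obtain ⟨hbt, hbP⟩ := mem_filter.1 hb
        obtain ⟨hct, hcP⟩ := mem_filter.1 hc
        exact (Nat.modEq_and_modEq_iff_modEq_mul hdQ.symm).1 ⟨ht l b hbt c hct, hP g b c hbP hcP⟩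
    _ ≤ (1 + 1 / (s * Q)) ^ k * (1 + 1 / (s * (Q * d : ℕ))) := by
        rw [← sum_mul]
        gcongr
        exact sum_gapWeight_le hs hQ fun _ => ht _

lemma monotone_partialSum (g : Fin k → ℕ) : Monotone (Fin.partialSum g) :=
  Fin.monotone_iff_le_succ.2 fun l => by simp [Fin.partialSum_succ]

lemma strictMono_partialSum {g : Fin k → ℕ} (hg : ∀ l, 0 < g l) :
    StrictMono (Fin.partialSum g) :=
  Fin.strictMono_iff_lt_succ.2 fun l => by simp [Fin.partialSum_succ, hg l]

lemma partialSum_insertNth (l : Fin (k + 1)) (b : ℕ) (g : Fin k → ℕ) (i : Fin (k + 2)) :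
    Fin.partialSum (l.insertNth b g : Fin (k + 1) → ℕ) i =
      Fin.partialSum (l.insertNth 0 g : Fin (k + 1) → ℕ) i + if l.castSucc < i then b else 0 := by
  induction i using Fin.induction with
  | zero => simp
  | succ j ih =>
    rw [Fin.partialSum_succ, Fin.partialSum_succ, ih]
    rcases Fin.eq_self_or_eq_succAbove l j with rfl | ⟨j, rfl⟩
    · simp
    · have hne : l ≠ l.succAbove j := (Fin.succAbove_ne l j).symm
      simp only [Fin.insertNth_apply_succAbove, Fin.castSucc_lt_castSucc_iff,
        Fin.castSucc_lt_succ_iff, hne.le_iff_lt]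
      ring

lemma sum_gapWeight_filter_dvd_le (hs : 0 < s) (hQ : 0 < Q) (hd : 0 < d) (hdQ : d.Coprime Q)
    {t : Fin k → Finset ℕ} (ht : ∀ l, ∀ b ∈ t l, ∀ c ∈ t l, b ≡ c [MOD Q]) {i j : Fin (k + 1)}
    (hij : i < j) :
    ∑ g ∈ Fintype.piFinset t with d ∣ Fin.partialSum g j - Fin.partialSum g i, gapWeight s g ≤
      (1 + 1 / (s * Q)) ^ k * (1 / d + s * Q) := by
  obtain ⟨l, rfl⟩ : ∃ l, Fin.castSucc l = i := Fin.exists_castSucc_eq.2 (Fin.ne_last_of_lt hij)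
  obtain ⟨n, rfl⟩ : ∃ n, k = n + 1 := Nat.exists_eq_succ_of_ne_zero l.pos.ne'
  have shift : ∀ g b, Fin.partialSum (l.insertNth b g : Fin (n + 1) → ℕ) j -
      Fin.partialSum (l.insertNth b g : Fin (n + 1) → ℕ) l.castSucc =
      (Fin.partialSum (l.insertNth 0 g : Fin (n + 1) → ℕ) j -
        Fin.partialSum (l.insertNth 0 g : Fin (n + 1) → ℕ) l.castSucc) + b := fun g b => by
    have hle := monotone_partialSum (l.insertNth 0 g : Fin (n + 1) → ℕ) hij.le
    rw [partialSum_insertNth l b g j, partialSum_insertNth l b g l.castSucc, if_pos hij,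
      if_neg (lt_irrefl _)]
    omega
  have factor_le : (1 : ℝ) + 1 / (s * (Q * d : ℕ)) ≤ (1 + 1 / (s * Q)) * (1 / d + s * Q) := by
    have hdiff : (1 + 1 / (s * Q)) * (1 / d + s * Q) - (1 + 1 / (s * (Q * d))) =
        1 / d + s * Q := by
      field_simp
      ring
    have hpos : 0 < 1 / d + s * Q := by positivity
    push_cast
    linarith
  calc _ ≤ (1 + 1 / (s * Q)) ^ n * (1 + 1 / (s * (Q * d : ℕ))) := by
        refine sum_gapWeight_filter_le hs hQ hd hdQ ht l _ fun g b c hb hc => ?_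
        rw [shift] at hb hc
        exact Nat.ModEq.add_left_cancel' _
          ((Nat.modEq_zero_iff_dvd.2 hb).trans (Nat.modEq_zero_iff_dvd.2 hc).symm)
    _ ≤ (1 + 1 / (s * Q)) ^ n * ((1 + 1 / (s * Q)) * (1 / d + s * Q)) := by gcongr
    _ = (1 + 1 / (s * Q)) ^ (n + 1) * (1 / d + s * Q) := by ring

lemma sum_one_div_sqrt_le (H : ℕ) : ∑ d ∈ Ioc 0 H, 1 / √(d : ℝ) ≤ 2 * √(H : ℝ) := by
  induction H with
  | zero => simp
  | succ n ih =>
    have hpos : 0 < √((n + 1 : ℕ) : ℝ) := Real.sqrt_pos.2 (by positivity)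
    have hsq : √((n + 1 : ℕ) : ℝ) ^ 2 = √(n : ℝ) ^ 2 + 1 := by
      rw [Real.sq_sqrt (by positivity), Real.sq_sqrt (by positivity), Nat.cast_succ]
    have hterm : 1 / √((n + 1 : ℕ) : ℝ) ≤ 2 * (√((n + 1 : ℕ) : ℝ) - √(n : ℝ)) := by
      rw [div_le_iff₀ hpos]
      nlinarith [sq_nonneg (√((n + 1 : ℕ) : ℝ) - √(n : ℝ))]
    rw [← insert_Ioc_right_eq_Ioc_add_one (Nat.zero_le n), sum_insert (by simp)]
    linarith

lemma sum_seriesModuli_le (hs : 0 < s) (hτ : TailBound w τ) :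
    ∑ d ∈ seriesModuli w H Q, 1 / √(d : ℝ) * (1 / d + s * Q) ≤ τ + 2 * √(H : ℝ) * s * Q := by
  have hsub : seriesModuli w H Q ⊆ Ioc w H := filter_subset _ _
  calc ∑ d ∈ seriesModuli w H Q, 1 / √(d : ℝ) * (1 / d + s * Q)
      = ∑ d ∈ seriesModuli w H Q, 1 / ((d : ℝ) * √d) +
          (∑ d ∈ seriesModuli w H Q, 1 / √(d : ℝ)) * (s * Q) := by
        rw [sum_mul, ← sum_add_distrib]
        refine sum_congr rfl fun d _ => ?_
        rw [mul_add, one_div_mul_one_div, mul_comm √_]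
    _ ≤ ∑ d ∈ Ioc w H, 1 / ((d : ℝ) * √d) + (∑ d ∈ Ioc 0 H, 1 / √(d : ℝ)) * (s * Q) := by
        gcongr
        exact hsub.trans (Ioc_subset_Ioc_left (Nat.zero_le w))
    _ ≤ τ + 2 * √(H : ℝ) * (s * Q) := by
        gcongr
        · exact hτ H
        · exact sum_one_div_sqrt_le H
    _ = τ + 2 * √(H : ℝ) * s * Q := by ring

theorem sum_gapWeight_mul_seriesMajorant_le (hs : 0 < s) (hQ : 0 < Q) (hτ : TailBound w τ)
    {t : Fin k → Finset ℕ} (ht : ∀ l, ∀ b ∈ t l, ∀ c ∈ t l, b ≡ c [MOD Q]) :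
    ∑ g ∈ Fintype.piFinset t, gapWeight s g * seriesMajorant w H Q (Fin.partialSum g) ≤
      (1 + 1 / (s * Q)) ^ k * (1 + (k + 1) ^ 2 * (τ + 2 * √(H : ℝ) * s * Q)) := by
  have hτ0 := hτ.nonneg
  have expand : ∑ g ∈ Fintype.piFinset t, gapWeight s g * seriesMajorant w H Q (Fin.partialSum g) =
      ∑ g ∈ Fintype.piFinset t, gapWeight s g +
        ∑ x ∈ increasingPairs (k + 1), ∑ d ∈ seriesModuli w H Q, 1 / √(d : ℝ) *
          ∑ g ∈ Fintype.piFinset t with d ∣ Fin.partialSum g x.2 - Fin.partialSum g x.1,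
            gapWeight s g := by
    simp only [seriesMajorant, mul_add, mul_one, sum_add_distrib, mul_sum, sum_filter, mul_ite,
      mul_zero]
    rw [sum_comm]
    refine congrArg _ (sum_congr rfl fun x _ => ?_)
    rw [sum_comm]
    simp only [mul_comm]
  have pair_le : ∀ x ∈ increasingPairs (k + 1), ∑ d ∈ seriesModuli w H Q, 1 / √(d : ℝ) *
      ∑ g ∈ Fintype.piFinset t with d ∣ Fin.partialSum g x.2 - Fin.partialSum g x.1,
        gapWeight s g ≤ (1 + 1 / (s * Q)) ^ k * (τ + 2 * √(H : ℝ) * s * Q) := fun x hx => by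
    have hfactor : 0 ≤ (1 + 1 / (s * Q)) ^ k := by positivity
    refine le_trans ?_ (mul_le_mul_of_nonneg_left (sum_seriesModuli_le hs hτ) hfactor)
    rw [mul_sum]
    refine sum_le_sum fun d hd => ?_
    obtain ⟨hd, hdQ⟩ := mem_filter.1 hd
    rw [mul_left_comm]
    gcongr
    exact sum_gapWeight_filter_dvd_le hs hQ (Nat.zero_lt_of_lt (mem_Ioc.1 hd).1) hdQ ht
      (mem_filter.1 hx).2
  have card_le : (#(increasingPairs (k + 1)) : ℝ) ≤ (k + 1) ^ 2 := by
    exact_mod_cast card_increasingPairs_le (k + 1)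
  calc _ ≤ (1 + 1 / (s * Q)) ^ k +
        #(increasingPairs (k + 1)) * ((1 + 1 / (s * Q)) ^ k * (τ + 2 * √(H : ℝ) * s * Q)) := by
        rw [expand, ← nsmul_eq_mul]
        exact add_le_add (sum_gapWeight_le hs hQ ht) (sum_le_card_nsmul _ _ _ pair_le)
    _ ≤ (1 + 1 / (s * Q)) ^ k +
        (k + 1) ^ 2 * ((1 + 1 / (s * Q)) ^ k * (τ + 2 * √(H : ℝ) * s * Q)) := by gcongr
    _ = _ := by ring

end GapSums

/-! ### Consecutive primes with a prescribed residue pattern -/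

section ResiduePatterns

variable {k Q w H Y x : ℕ} {s τ : ℝ}

/-- The `n`-th prime, counted from `nthPrime 0 = 2`. -/
noncomputable abbrev nthPrime (n : ℕ) : ℕ := Nat.nth Nat.Prime n

lemma strictMono_nthPrime : StrictMono nthPrime := Nat.nth_strictMono Nat.infinite_setOfPred_prime

/-- The `k` gaps between the consecutive primes with indices `n, …, n + k`. -/
noncomputable def primeGaps (k n : ℕ) (l : Fin k) : ℕ := nthPrime (n + l + 1) - nthPrime (n + l)

/-- The length `p_{n+k} - p_n` of the interval spanned by `k + 1` consecutive primes. -/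
noncomputable def primeSpan (k n : ℕ) : ℕ := nthPrime (n + k) - nthPrime n

lemma primeGaps_pos (n : ℕ) (l : Fin k) : 0 < primeGaps k n l :=
  Nat.sub_pos_of_lt (strictMono_nthPrime (Nat.lt_succ_self _))

lemma nthPrime_add_primeGaps (n : ℕ) (l : Fin k) :
    nthPrime (n + l) + primeGaps k n l = nthPrime (n + l + 1) :=
  Nat.add_sub_cancel' (strictMono_nthPrime (Nat.lt_succ_self _)).le

lemma nthPrime_add_partialSum_primeGaps (n : ℕ) (i : Fin (k + 1)) :
    nthPrime n + Fin.partialSum (primeGaps k n) i = nthPrime (n + i) := by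
  induction i using Fin.induction with
  | zero => simp
  | succ l ih =>
    rw [Fin.partialSum_succ, ← add_assoc, ih]
    exact nthPrime_add_primeGaps n l

lemma partialSum_primeGaps_last (n : ℕ) :
    Fin.partialSum (primeGaps k n) (Fin.last k) = primeSpan k n :=
  (Nat.sub_eq_of_eq_add'
    (nthPrime_add_partialSum_primeGaps n (Fin.last k)).symm).symm

lemma sum_primeGaps (n : ℕ) : ∑ l, primeGaps k n l = primeSpan k n := by
  rw [← partialSum_primeGaps_last, Fin.partialSum, Fin.val_last, List.take_of_length_le (by simp),
    List.sum_ofFn]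

lemma gapWeight_primeGaps (s : ℝ) (n : ℕ) :
    gapWeight s (primeGaps k n) = Real.exp (-(s * primeSpan k n)) := by
  rw [gapWeight, ← Real.exp_sum, sum_neg_distrib, ← mul_sum, ← Nat.cast_sum, sum_primeGaps]

/-- The `m` consecutive primes from the `n`-th on have the residues `A 0, A 1, …` modulo `Q`. -/
def HasPattern {m : ℕ} (A : Fin m → (ZMod Q)ˣ) (n : ℕ) : Prop :=
  ∀ i : Fin m, (nthPrime (n + i) : ZMod Q) = A i

/-- The gaps `b ∈ [1, H]` that may follow the `l`-th prime in a pattern `A` modulo `Q`. -/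
def gapClass (A : Fin (k + 1) → (ZMod Q)ˣ) (H : ℕ) (l : Fin k) : Finset ℕ :=
  {b ∈ Icc 1 H | (A l.castSucc + b : ZMod Q) = A l.succ}

variable {A : Fin (k + 1) → (ZMod Q)ˣ} {n : ℕ}

lemma modEq_of_mem_gapClass {l : Fin k} {b c : ℕ} (hb : b ∈ gapClass A H l)
    (hc : c ∈ gapClass A H l) : b ≡ c [MOD Q] :=
  (ZMod.natCast_eq_natCast_iff _ _ _).1 <|
    add_left_cancel ((mem_filter.1 hb).2.trans (mem_filter.1 hc).2.symm)

lemma HasPattern.primeGaps_mem (hA : HasPattern A n) (hH : primeSpan k n ≤ H) :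
    primeGaps k n ∈ Fintype.piFinset (gapClass A H) := by
  refine Fintype.mem_piFinset.2 fun l => mem_filter.2 ⟨mem_Icc.2 ⟨primeGaps_pos n l, ?_⟩, ?_⟩
  · exact (single_le_sum (fun _ _ => Nat.zero_le _) (mem_univ l)).trans
      ((sum_primeGaps n).trans_le hH)
  · rw [← hA l.castSucc, ← hA l.succ, ← Nat.cast_add]
    exact congrArg Nat.cast (nthPrime_add_primeGaps n l)

lemma HasPattern.val_add_mul_div [NeZero Q] (hA : HasPattern A n) :
    (A 0 : ZMod Q).val + Q * (nthPrime n / Q) = nthPrime n := by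
  rw [← hA 0, ZMod.val_natCast]
  exact Nat.mod_add_div _ _

/-- The conditions on the parameters under which the sieve bounds below hold for patterns of
`k + 1` primes modulo `Q`: every prime up to `w` divides `Q`, and `w` is large in terms of `k`. -/
structure IsSievingModulus (k w Q : ℕ) (τ : ℝ) : Prop where
  ne_zero : Q ≠ 0
  primorial_dvd : primorial w ∣ Q
  sq_le : 4 * ((k + 1) * (k + 1) ^ 2) ^ 2 ≤ w
  pow_four_le : (2 * (k + 1)) ^ 4 ≤ w
  tailBound : TailBound w τ

/-- The sieve density of the primes `p ≤ x` from which a tuple of `k + 1` primes in fixed classes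
modulo `Q` starts, before the singular series is taken into account. -/
noncomputable def sieveDensity (k Q Y x : ℕ) (τ : ℝ) : ℝ :=
  ((x : ℝ) / Q + 1) * (1 + τ) * ((Q : ℝ) / Q.totient) ^ (k + 1) / Real.log Y ^ (k + 1)

/-- The remainder term of the sieve for `k + 1` primes. -/
noncomputable def sieveError (k Y : ℕ) : ℝ :=
  2 * (((Y : ℝ) ^ (k + 1)) ^ 2 * √((Y : ℝ) ^ (k + 1)))

lemma sieveDensity_nonneg (hτ : TailBound w τ) : 0 ≤ sieveDensity k Q Y x τ := by
  have := hτ.nonneg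
  have := Real.log_natCast_nonneg Y
  rw [sieveDensity]
  positivity

lemma sieveError_nonneg : 0 ≤ sieveError k Y := by
  rw [sieveError]
  positivity

lemma card_primeGaps_eq_le_tupleModulus (hQ : IsSievingModulus k w Q τ) (hY : 1 < Y)
    {g : Fin k → ℕ} (hg : ∀ l, 0 < g l) {T : Finset ℕ} (hA : ∀ n ∈ T, HasPattern A n)
    (hgaps : ∀ n ∈ T, primeGaps k n = g) (hlow : ∀ n ∈ T, Y ^ (k + 1) < nthPrime n)
    (hhigh : ∀ n ∈ T, nthPrime n ≤ x) :
    (#T : ℝ) ≤ (x / Q + 1 : ℕ) * (1 + τ) *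
      ((tupleModulus Q (Fin.partialSum g) : ℝ) / (tupleModulus Q (Fin.partialSum g)).totient) ^
        (k + 1) / Real.log Y ^ (k + 1) + sieveError k Y := by
  have : NeZero Q := ⟨hQ.ne_zero⟩
  have hmono := strictMono_partialSum hg
  have hinj : Set.InjOn (fun n => nthPrime n / Q) (T : Set ℕ) := fun n hn n' hn' hnn' => by
    apply strictMono_nthPrime.injective
    rw [← (hA n hn).val_add_mul_div, ← (hA n' hn').val_add_mul_div]
    exact congrArg (_ + Q * ·) hnn'
  rw [← card_image_of_injOn hinj]
  refine card_prime_tuples_le (A := (A 0 : ZMod Q).val) (Nat.succ_pos k) hY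
    (tupleModulus_ne_zero hQ.ne_zero hmono) (hQ.primorial_dvd.mul_right _) hQ.pow_four_le
    hQ.tailBound (Dvd.intro _ rfl) (fun _ _ => sub_dvd_tupleModulus hmono)
    (image_subset_iff.2 fun n hn => ?_) (forall_mem_image.2 fun n hn i => ?_)
  · exact mem_range.2 (Nat.lt_succ_of_le (Nat.div_le_div_right (hhigh n hn)))
  · rw [(hA n hn).val_add_mul_div, ← hgaps n hn, nthPrime_add_partialSum_primeGaps]
    exact ⟨Nat.prime_nth_prime _,
      (hlow n hn).trans_le (strictMono_nthPrime.monotone (Nat.le_add_right _ _))⟩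

lemma card_primeGaps_eq_le_seriesMajorant (hQ : IsSievingModulus k w Q τ) (hY : 1 < Y)
    {g : Fin k → ℕ} {T : Finset ℕ} (hA : ∀ n ∈ T, HasPattern A n)
    (hgaps : ∀ n ∈ T, primeGaps k n = g) (hH : ∀ n ∈ T, primeSpan k n ≤ H)
    (hlow : ∀ n ∈ T, Y ^ (k + 1) < nthPrime n) (hhigh : ∀ n ∈ T, nthPrime n ≤ x) :
    (#T : ℝ) ≤ sieveDensity k Q Y x τ * seriesMajorant w H Q (Fin.partialSum g) +
      sieveError k Y := by
  rcases T.eq_empty_or_nonempty with rfl | ⟨n, hn⟩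
  · have := sieveDensity_nonneg (k := k) (Q := Q) (Y := Y) (x := x) hQ.tailBound
    have := sieveError_nonneg (k := k) (Y := Y)
    have := seriesMajorant_nonneg w H Q (Fin.partialSum g)
    rw [card_empty, Nat.cast_zero]
    positivity
  have hτ := hQ.tailBound.nonneg
  have hlog : 0 < Real.log Y := Real.log_pos (by exact_mod_cast hY)
  have hg : ∀ l, 0 < g l := fun l => by
    rw [← hgaps n hn]
    exact primeGaps_pos n l
  have hgH : ∀ i, Fin.partialSum g i ≤ H := fun i =>
    (monotone_partialSum g (Fin.le_last i)).trans <| by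
      rw [← hgaps n hn, partialSum_primeGaps_last]
      exact hH n hn
  have hJ : ((x / Q + 1 : ℕ) : ℝ) ≤ (x : ℝ) / Q + 1 := by
    push_cast
    gcongr
    exact Nat.cast_div_le
  calc (#T : ℝ) ≤ _ := card_primeGaps_eq_le_tupleModulus hQ hY hg hA hgaps hlow hhigh
    _ ≤ ((x : ℝ) / Q + 1) * (1 + τ) *
          (((Q : ℝ) / Q.totient) ^ (k + 1) * seriesMajorant w H Q (Fin.partialSum g)) /
          Real.log Y ^ (k + 1) + sieveError k Y := by
        gcongr
        exact tupleModulus_div_totient_pow_le hQ.ne_zero hQ.primorial_dvd hQ.sq_le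
          (strictMono_partialSum hg) hgH
    _ = _ := by
        rw [sieveDensity]
        ring

theorem sum_exp_neg_primeSpan_le (hQ : IsSievingModulus k w Q τ) (hs : 0 < s) (hY : 1 < Y)
    {N : Finset ℕ} (hA : ∀ n ∈ N, HasPattern A n) (hH : ∀ n ∈ N, primeSpan k n ≤ H)
    (hlow : ∀ n ∈ N, Y ^ (k + 1) < nthPrime n) (hhigh : ∀ n ∈ N, nthPrime n ≤ x) :
    ∑ n ∈ N, Real.exp (-(s * primeSpan k n)) ≤ (1 + 1 / (s * Q)) ^ k *
      (sieveDensity k Q Y x τ * (1 + (k + 1) ^ 2 * (τ + 2 * √(H : ℝ) * s * Q)) +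
        sieveError k Y) := by
  classical
  have hQ0 := Nat.pos_of_ne_zero hQ.ne_zero
  have hdensity : 0 ≤ sieveDensity k Q Y x τ := sieveDensity_nonneg hQ.tailBound
  have hmem : ∀ n ∈ N, primeGaps k n ∈ Fintype.piFinset (gapClass A H) :=
    fun n hn => (hA n hn).primeGaps_mem (hH n hn)
  have hclass : ∀ l, ∀ b ∈ gapClass A H l, ∀ c ∈ gapClass A H l, b ≡ c [MOD Q] :=
    fun _ _ hb _ hc => modEq_of_mem_gapClass hb hc
  calc ∑ n ∈ N, Real.exp (-(s * primeSpan k n))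
      = ∑ g ∈ Fintype.piFinset (gapClass A H), #{n ∈ N | primeGaps k n = g} * gapWeight s g := by
        rw [← sum_fiberwise_of_maps_to hmem]
        refine sum_congr rfl fun g _ => ?_
        rw [← nsmul_eq_mul, ← sum_const]
        refine sum_congr rfl fun n hn => ?_
        rw [← (mem_filter.1 hn).2, gapWeight_primeGaps]
    _ ≤ ∑ g ∈ Fintype.piFinset (gapClass A H), (sieveDensity k Q Y x τ *
          seriesMajorant w H Q (Fin.partialSum g) + sieveError k Y) * gapWeight s g :=
        sum_le_sum fun g _ => mul_le_mul_of_nonneg_right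
          (card_primeGaps_eq_le_seriesMajorant hQ hY (fun n hn => hA n (mem_filter.1 hn).1)
            (fun n hn => (mem_filter.1 hn).2) (fun n hn => hH n (mem_filter.1 hn).1)
            (fun n hn => hlow n (mem_filter.1 hn).1) (fun n hn => hhigh n (mem_filter.1 hn).1))
          (gapWeight_nonneg s g)
    _ = sieveDensity k Q Y x τ * ∑ g ∈ Fintype.piFinset (gapClass A H),
            gapWeight s g * seriesMajorant w H Q (Fin.partialSum g) +
          sieveError k Y * ∑ g ∈ Fintype.piFinset (gapClass A H), gapWeight s g := by
        rw [mul_sum, mul_sum, ← sum_add_distrib]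
        exact sum_congr rfl fun g _ => by ring
    _ ≤ sieveDensity k Q Y x τ * ((1 + 1 / (s * Q)) ^ k *
            (1 + (k + 1) ^ 2 * (τ + 2 * √(H : ℝ) * s * Q))) +
          sieveError k Y * (1 + 1 / (s * Q)) ^ k := by
        gcongr
        · exact sum_gapWeight_mul_seriesMajorant_le hs hQ0 hQ.tailBound hclass
        · exact sieveError_nonneg
        · exact sum_gapWeight_le hs hQ0 hclass
    _ = _ := by ring

end ResiduePatterns

/-! ### Comparing the sieve bound with the number of primes -/

section Comparison

variable {k Q w H Y x a b : ℕ} {s τ : ℝ}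

lemma sum_primeSpan_add (k : ℕ) (hab : a ≤ b) :
    ∑ n ∈ Ico a b, primeSpan k n + ∑ j ∈ range k, nthPrime (a + j) =
      ∑ j ∈ range k, nthPrime (b + j) := by
  induction b, hab using Nat.le_induction with
  | base => simp
  | succ b hab ih =>
    have hwindow : nthPrime b + ∑ j ∈ range k, nthPrime (b + 1 + j) =
        ∑ j ∈ range k, nthPrime (b + j) + nthPrime (b + k) := by
      rw [← sum_range_succ, sum_range_succ', add_comm]
      simp only [add_zero, add_assoc, add_comm 1]
    have hle : nthPrime b ≤ nthPrime (b + k) := strictMono_nthPrime.monotone (by omega)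
    rw [sum_Ico_succ_top hab, primeSpan]
    omega

lemma sum_primeSpan_le (hb : ∀ n < b, nthPrime (n + k) ≤ x) :
    ∑ n ∈ Ico a b, primeSpan k n ≤ k * x := by
  rcases lt_or_ge a b with hab | hba
  · calc ∑ n ∈ Ico a b, primeSpan k n ≤ ∑ j ∈ range k, nthPrime (b + j) :=
          (Nat.le_add_right _ _).trans_eq (sum_primeSpan_add k hab.le)
      _ ≤ ∑ _j ∈ range k, x := sum_le_sum fun j hj =>
          (strictMono_nthPrime.monotone (by have := mem_range.1 hj; omega)).trans
            (hb (b - 1) (by omega))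
      _ = k * x := by simp
  · simp [Ico_eq_empty_of_le hba]

lemma exp_neg_mul_one_add_sub_le (c y : ℝ) :
    Real.exp (-c) * (1 + c - y) ≤ Real.exp (-y) := by
  calc Real.exp (-c) * (1 + c - y) ≤ Real.exp (-c) * Real.exp (c - y) := by
        gcongr
        linarith [Real.add_one_le_exp (c - y)]
    _ = Real.exp (-y) := by rw [← Real.exp_add, sub_eq_add_neg, neg_add_cancel_left]

/-- The tangent line of `exp` at `-k` is used because `s · primeSpan k n` is at most `k` on
average. -/
lemma le_sum_exp_neg_primeSpan (hs : 0 < s) (hb : ∀ n < b, nthPrime (n + k) ≤ x)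
    (hN : s * x ≤ (b - a : ℕ)) {c : ℝ} (hc : 0 ≤ c) (hH : k + c ≤ s * H) :
    s * x * (Real.exp (-k) * (1 - Real.exp (-c))) ≤
      ∑ n ∈ Ico a b with primeSpan k n ≤ H, Real.exp (-(s * primeSpan k n)) := by
  have htangent : ∀ n, Real.exp (-k) * ((1 - Real.exp (-c)) + (k - s * primeSpan k n)) ≤
      if primeSpan k n ≤ H then Real.exp (-(s * primeSpan k n)) else 0 := fun n => by
    have hexp := exp_neg_mul_one_add_sub_le k (s * primeSpan k n)
    have hmul : Real.exp (-k) * Real.exp (-c) = Real.exp (-(k + c)) := by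
      rw [← Real.exp_add, neg_add]
    split_ifs with hn
    · linarith [Real.exp_pos (-(k + c))]
    · have : Real.exp (-(s * primeSpan k n)) ≤ Real.exp (-(k + c)) := by
        refine Real.exp_le_exp.2 (neg_le_neg (hH.trans ?_))
        gcongr
        exact (not_le.1 hn).le
      linarith
  have haverage : s * ∑ n ∈ Ico a b, (primeSpan k n : ℝ) ≤ (b - a : ℕ) * k := by
    have hsum : ∑ n ∈ Ico a b, (primeSpan k n : ℝ) ≤ k * x := by
      exact_mod_cast sum_primeSpan_le hb
    calc s * ∑ n ∈ Ico a b, (primeSpan k n : ℝ) ≤ s * (k * x) := by gcongr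
      _ = s * x * k := by ring
      _ ≤ (b - a : ℕ) * k := by gcongr
  have hc1 : 0 ≤ 1 - Real.exp (-c) := sub_nonneg.2 (Real.exp_le_one_iff.2 (neg_nonpos.2 hc))
  calc s * x * (Real.exp (-k) * (1 - Real.exp (-c)))
      ≤ (b - a : ℕ) * (Real.exp (-k) * (1 - Real.exp (-c))) := by gcongr
    _ ≤ Real.exp (-k) * ((b - a : ℕ) * (1 - Real.exp (-c)) +
          ((b - a : ℕ) * k - s * ∑ n ∈ Ico a b, (primeSpan k n : ℝ))) := by
        nlinarith [mul_nonneg (Real.exp_pos (-(k : ℝ))).le (sub_nonneg.2 haverage)]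
    _ = ∑ n ∈ Ico a b, Real.exp (-k) * ((1 - Real.exp (-c)) + (k - s * primeSpan k n)) := by
        simp only [← mul_sum, sum_add_distrib, sum_sub_distrib, sum_const, Nat.card_Ico,
          nsmul_eq_mul, mul_sub]
    _ ≤ _ := by
        rw [sum_filter]
        exact sum_le_sum fun n _ => htangent n

theorem mul_exp_neg_le_card_patterns (hQ : IsSievingModulus k w Q τ) (hs : 0 < s) (hY : 1 < Y)
    (ha : ∀ n, a ≤ n → Y ^ (k + 1) < nthPrime n) (hb : ∀ n < b, nthPrime (n + k) ≤ x)
    {𝒜 : Finset (Fin (k + 1) → (ZMod Q)ˣ)} (h𝒜 : ∀ n, a ≤ n → ∃ A ∈ 𝒜, HasPattern A n)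
    (hN : s * x ≤ (b - a : ℕ)) {c : ℝ} (hc : 0 ≤ c) (hH : k + c ≤ s * H) :
    s * x * (Real.exp (-k) * (1 - Real.exp (-c))) ≤ #𝒜 * ((1 + 1 / (s * Q)) ^ k *
      (sieveDensity k Q Y x τ * (1 + (k + 1) ^ 2 * (τ + 2 * √(H : ℝ) * s * Q)) +
        sieveError k Y)) := by
  classical
  refine (le_sum_exp_neg_primeSpan hs hb hN hc hH).trans ?_
  choose! A hA𝒜 hA using h𝒜
  have hmem : ∀ {n}, n ∈ {n ∈ Ico a b | primeSpan k n ≤ H} → (a ≤ n ∧ n < b) ∧ primeSpan k n ≤ H :=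
    fun {n} hn => by rwa [mem_filter, mem_Ico] at hn
  rw [← sum_fiberwise_of_maps_to fun n hn => hA𝒜 n (hmem hn).1.1, ← nsmul_eq_mul]
  refine sum_le_card_nsmul _ _ _ fun B _ => sum_exp_neg_primeSpan_le (A := B) hQ hs hY ?_ ?_ ?_ ?_
    <;> intro n hn <;> obtain ⟨hnN, rfl⟩ := mem_filter.1 hn <;>
    obtain ⟨⟨han, hnb⟩, hnH⟩ := hmem hnN
  · exact hA n han
  · exact hnH
  · exact ha n han
  · exact (strictMono_nthPrime.monotone (Nat.le_add_right n k)).trans (hb n hnb)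

end Comparison

/-! ### Recurrent patterns modulo a sieving modulus -/

section RecurrentPatterns

open Topology

variable {k Q w Y R n x : ℕ} {σ τ : ℝ}

lemma lt_nthPrime_of_primeCounting_le (hn : R.primeCounting ≤ n) : R < nthPrime n := by
  by_contra! hle
  exact hn.not_gt ((Nat.lt_nth_iff_count_lt Nat.infinite_setOfPred_prime).2 (Nat.lt_succ_of_le hle))

lemma nthPrime_le_of_lt_primeCounting (hn : n < x.primeCounting) : nthPrime n ≤ x :=
  Nat.le_of_lt_succ (Nat.nth_lt_of_lt_count hn)

lemma pow_div_log_le_primeCounting_sub (hR : 400 ≤ R) (hk : k ≤ R) :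
    2 / 9 * (R : ℝ) ^ 3 / Real.log R ≤
      ((R ^ 3).primeCounting - k - R.primeCounting : ℕ) := by
  have hR' : (400 : ℝ) ≤ R := by exact_mod_cast hR
  have hk' : (k : ℝ) ≤ R := by exact_mod_cast hk
  have hlog : 0 < Real.log R := Real.log_pos (by linarith)
  have hlogR : Real.log R ≤ R := (Real.log_le_sub_one_of_pos (by linarith)).trans (by linarith)
  have hlog_succ : Real.log ((R : ℝ) ^ 3 + 1) ≤ 3 * R := by
    calc Real.log ((R : ℝ) ^ 3 + 1) ≤ Real.log ((R + 1) ^ 3) :=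
          Real.log_le_log (by positivity) (by nlinarith [sq_nonneg (R : ℝ)])
      _ = 3 * Real.log (R + 1) := by rw [Real.log_pow, Nat.cast_ofNat]
      _ ≤ 3 * R := by linarith [Real.log_le_sub_one_of_pos (show (0 : ℝ) < R + 1 by linarith)]
  have hchebyshev : (R : ℝ) ^ 3 * Real.log 2 - Real.log ((R : ℝ) ^ 3 + 1) ≤
      (R ^ 3).primeCounting * (3 * Real.log R) := by
    have hge := Chebyshev.pi_ge (R ^ 3)
    rw [Nat.cast_pow, Real.log_pow, Nat.cast_ofNat] at hge
    exact (div_le_iff₀ (by positivity)).1 hge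
  have hsmall : (R.primeCounting : ℝ) ≤ R + 1 := by exact_mod_cast Nat.count_le Nat.Prime
  have hsub : ((R ^ 3).primeCounting : ℝ) - k - R.primeCounting ≤
      ((R ^ 3).primeCounting - k - R.primeCounting : ℕ) := by
    rw [sub_le_iff_le_add, sub_le_iff_le_add]
    norm_cast
    omega
  refine le_trans ?_ hsub
  rw [div_le_iff₀ hlog]
  have hlost : (k + R.primeCounting) * Real.log R ≤ 3 * R * R :=
    mul_le_mul (by linarith) hlogR hlog.le (by positivity)
  have hcube : 400 * (R : ℝ) ^ 2 ≤ R ^ 3 := by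
    rw [pow_succ' _ 2]
    gcongr
  have hlog_two : (R : ℝ) ^ 3 * 0.693 ≤ R ^ 3 * Real.log 2 := by
    gcongr
    linarith [Real.log_two_gt_d9]
  nlinarith

/-- The residue patterns of length `m` modulo `q` shown by infinitely many runs of consecutive
primes. -/
def recurrentPatterns (q m : ℕ) : Set (Fin m → (ZMod q)ˣ) :=
  {A | ∃ᶠ n in atTop, HasPattern A n}

lemma eventually_exists_hasPattern (hQ : Q ≠ 0) (m : ℕ) :
    ∀ᶠ n in atTop, ∃ A : Fin m → (ZMod Q)ˣ, HasPattern A n := by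
  filter_upwards [eventually_gt_atTop Q] with n hn
  have hcop : ∀ i : Fin m, (nthPrime (n + i)).Coprime Q := fun i => by
    refine (Nat.coprime_or_dvd_of_prime (Nat.prime_nth_prime _) Q).resolve_right fun hdvd => ?_
    have hle : n + i ≤ nthPrime (n + i) := strictMono_nthPrime.le_apply
    have hleQ : nthPrime (n + i) ≤ Q := Nat.le_of_dvd (Nat.pos_of_ne_zero hQ) hdvd
    omega
  exact ⟨fun i => ZMod.unitOfCoprime _ (hcop i), fun i => by simp⟩

lemma eventually_exists_mem_recurrentPatterns (hQ : Q ≠ 0) (m : ℕ) :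
    ∀ᶠ n in atTop, ∃ A ∈ recurrentPatterns Q m, HasPattern A n := by
  have : NeZero Q := ⟨hQ⟩
  have hrare : ∀ᶠ n in atTop, ∀ A : Fin m → (ZMod Q)ˣ, A ∉ recurrentPatterns Q m →
      ¬ HasPattern A n := by
    refine eventually_all.2 fun A => ?_
    by_cases hA : A ∈ recurrentPatterns Q m
    · simp [hA]
    · filter_upwards [not_frequently.1 hA] with n hn _ using hn
  filter_upwards [hrare, eventually_exists_hasPattern hQ m] with n hn ⟨A, hA⟩
  exact ⟨A, not_imp_not.1 (hn A) hA, hA⟩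

lemma tendsto_sieveDensity_div (k : ℕ) (hQ : Q ≠ 0) (hσ : σ ≠ 0) (τ : ℝ) :
    Tendsto (fun Y : ℕ => sieveDensity k Q Y ((Y ^ (k + 1)) ^ 3) τ /
        ((σ / Real.log Y) ^ (k + 1) * ((Y : ℝ) ^ (k + 1)) ^ 3)) atTop
      (𝓝 (1 / Q * ((1 + τ) * ((Q : ℝ) / Q.totient) ^ (k + 1)) / σ ^ (k + 1))) := by
  have hinv : Tendsto (fun Y : ℕ => 1 / (Q : ℝ) + (((Y : ℝ)⁻¹) ^ (k + 1)) ^ 3) atTop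
      (𝓝 (1 / (Q : ℝ))) := by
    simpa using (((tendsto_inv_atTop_nhds_zero_nat (𝕜 := ℝ)).pow (k + 1)).pow 3).const_add
      (1 / (Q : ℝ))
  refine ((hinv.mul_const ((1 + τ) * ((Q : ℝ) / Q.totient) ^ (k + 1))).div_const
    (σ ^ (k + 1))).congr' ?_
  filter_upwards [eventually_gt_atTop 1] with Y hY
  have hlog : 0 < Real.log Y := Real.log_pos (by exact_mod_cast hY)
  rw [sieveDensity]
  push_cast
  generalize ((Q : ℝ) / Q.totient) ^ (k + 1) = ratio
  simp only [inv_pow, div_pow]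
  field_simp

lemma tendsto_log_div_sqrt : Tendsto (fun y : ℝ => Real.log y / √y) atTop (𝓝 0) := by
  simpa only [Real.sqrt_eq_rpow] using
    (isLittleO_log_rpow_atTop (show (0 : ℝ) < 1 / 2 by norm_num)).tendsto_div_nhds_zero

lemma tendsto_sieveError_div (k : ℕ) (hσ : σ ≠ 0) :
    Tendsto (fun Y : ℕ => sieveError k Y /
      ((σ / Real.log Y) ^ (k + 1) * ((Y : ℝ) ^ (k + 1)) ^ 3)) atTop (𝓝 0) := by
  have hlim : Tendsto (fun Y : ℕ => 2 * (Real.log Y / √(Y : ℝ) / σ) ^ (k + 1)) atTop (𝓝 0) := by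
    simpa using (((tendsto_log_div_sqrt.comp tendsto_natCast_atTop_atTop).div_const σ).pow
      (k + 1)).const_mul 2
  refine hlim.congr' ?_
  filter_upwards [eventually_gt_atTop 1] with Y hY
  have hsqrt : 0 < √(Y : ℝ) := Real.sqrt_pos.2 (by positivity)
  have hY_eq : (Y : ℝ) = √(Y : ℝ) ^ 2 := (Real.sq_sqrt (by positivity)).symm
  have hsqrt_pow : √((Y : ℝ) ^ (k + 1)) = √(Y : ℝ) ^ (k + 1) := by
    rw [Real.sqrt_eq_iff_mul_self_eq (by positivity) (by positivity), ← mul_pow,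
      Real.mul_self_sqrt (by positivity)]
  rw [sieveError, hsqrt_pow]
  generalize √(Y : ℝ) = r at *
  rw [hY_eq, div_pow, div_pow, div_pow]
  field_simp
  ring

lemma tendsto_sqrt_ceil_mul_div {B : ℝ} (hB : 0 ≤ B) :
    Tendsto (fun L : ℝ => √(⌈B * L⌉₊ : ℝ) / L) atTop (𝓝 0) := by
  have hratio : Tendsto (fun L : ℝ => √((⌈B * L⌉₊ : ℝ) / L)) atTop (𝓝 √B) :=
    (Real.continuous_sqrt.tendsto B).comp (tendsto_nat_ceil_mul_div_atTop hB)
  have hinv : Tendsto (fun L : ℝ => (√L)⁻¹) atTop (𝓝 0) :=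
    tendsto_inv_atTop_zero.comp Real.tendsto_sqrt_atTop
  refine (mul_zero √B ▸ hratio.mul hinv).congr' ?_
  filter_upwards [eventually_gt_atTop 0] with L hL
  rw [Real.sqrt_div' _ hL.le, ← div_eq_mul_inv, div_div, Real.mul_self_sqrt hL.le]

/-- The exponent `s = σ / log Y` of the weights `e^{-s · primeSpan k n}` at sieve level `Y`, with
`σ = 2 / (9 (k + 1))`: by Chebyshev there are then at least `s x` primes in `(x^{1/3}, x]` for
`x = Y^{3 (k + 1)}`. -/
noncomputable def decayRate (k Y : ℕ) : ℝ := 2 / (9 * (k + 1)) / Real.log Y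

/-- The cut-off `H` for the spans at sieve level `Y`, chosen so that `k + 2 ≤ decayRate k Y * H`. -/
noncomputable def spanBound (k Y : ℕ) : ℕ := ⌈9 * (k + 1) * (k + 2) / 2 * Real.log Y⌉₊

lemma decayRate_pos (hY : 1 < Y) : 0 < decayRate k Y :=
  div_pos (by positivity) (Real.log_pos (by exact_mod_cast hY))

lemma add_two_le_decayRate_mul_spanBound (hY : 1 < Y) :
    k + 2 ≤ decayRate k Y * spanBound k Y := by
  have hlog : 0 < Real.log Y := Real.log_pos (by exact_mod_cast hY)
  calc (k : ℝ) + 2 = decayRate k Y * (9 * (k + 1) * (k + 2) / 2 * Real.log Y) := by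
        rw [decayRate]
        field_simp
    _ ≤ decayRate k Y * spanBound k Y :=
        mul_le_mul_of_nonneg_left (Nat.le_ceil _) (decayRate_pos hY).le

lemma decayRate_mul_le_primeCounting_sub (hY : 400 ≤ Y) (hk : k ≤ Y) :
    decayRate k Y * ((Y : ℝ) ^ (k + 1)) ^ 3 ≤
      (((Y ^ (k + 1)) ^ 3).primeCounting - k - (Y ^ (k + 1)).primeCounting : ℕ) := by
  have hYR : Y ≤ Y ^ (k + 1) := Nat.le_self_pow k.succ_ne_zero Y
  refine le_trans (le_of_eq ?_) (pow_div_log_le_primeCounting_sub (hY.trans hYR) (hk.trans hYR))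
  have hlog : 0 < Real.log Y := Real.log_pos (by exact_mod_cast (by omega : 1 < Y))
  rw [decayRate, Nat.cast_pow, Real.log_pow, Nat.cast_succ]
  field_simp

lemma eventually_exp_le_ncard (hQ : IsSievingModulus k w Q τ) :
    ∀ᶠ Y : ℕ in atTop, decayRate k Y * ((Y : ℝ) ^ (k + 1)) ^ 3 *
        (Real.exp (-k) * (1 - Real.exp (-2))) ≤
      (recurrentPatterns Q (k + 1)).ncard * ((1 + 1 / (decayRate k Y * Q)) ^ k *
        (sieveDensity k Q Y ((Y ^ (k + 1)) ^ 3) τ * (1 + (k + 1) ^ 2 *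
            (τ + 2 * √(spanBound k Y : ℝ) * decayRate k Y * Q)) + sieveError k Y)) := by
  have : NeZero Q := ⟨hQ.ne_zero⟩
  have hscale : Tendsto (fun Y : ℕ => (Y ^ (k + 1)).primeCounting) atTop atTop :=
    Nat.tendsto_primeCounting.comp (tendsto_pow_atTop k.succ_ne_zero)
  filter_upwards [eventually_ge_atTop 400, eventually_ge_atTop k, hscale.eventually
    (eventually_forall_ge_atTop.2 (eventually_exists_mem_recurrentPatterns hQ.ne_zero (k + 1)))]
    with Y hY hkY hpattern
  have hY1 : 1 < Y := by omega
  rw [Set.ncard_eq_toFinset_card _ (Set.toFinite _)]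
  exact_mod_cast mul_exp_neg_le_card_patterns (x := (Y ^ (k + 1)) ^ 3) (c := 2) hQ
    (decayRate_pos hY1) hY1 (fun n => lt_nthPrime_of_primeCounting_le)
    (b := ((Y ^ (k + 1)) ^ 3).primeCounting - k)
    (fun n hn => nthPrime_le_of_lt_primeCounting (by omega))
    (fun n hn => by simpa using hpattern n hn)
    (by exact_mod_cast decayRate_mul_le_primeCounting_sub hY hkY) zero_le_two
    (add_two_le_decayRate_mul_spanBound hY1)

lemma tendsto_decayRate (k : ℕ) : Tendsto (decayRate k) atTop (𝓝 0) :=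
  (Real.tendsto_log_atTop.comp tendsto_natCast_atTop_atTop).const_div_atTop _

lemma tendsto_sqrt_spanBound_mul_decayRate (k : ℕ) :
    Tendsto (fun Y => √(spanBound k Y : ℝ) * decayRate k Y) atTop (𝓝 0) := by
  have hlim := ((tendsto_sqrt_ceil_mul_div (B := 9 * (k + 1) * (k + 2) / 2)
    (by positivity)).comp (Real.tendsto_log_atTop.comp tendsto_natCast_atTop_atTop)).const_mul
      (2 / (9 * (k + 1) : ℝ))
  rw [mul_zero] at hlim
  refine hlim.congr fun Y => ?_
  simp only [Function.comp_apply, spanBound, decayRate]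
  ring

lemma tendsto_sieve_bound_div (k : ℕ) (hQ : Q ≠ 0) (τ : ℝ) :
    Tendsto (fun Y : ℕ => (decayRate k Y + 1 / Q) ^ k *
        (sieveDensity k Q Y ((Y ^ (k + 1)) ^ 3) τ /
            (decayRate k Y ^ (k + 1) * ((Y : ℝ) ^ (k + 1)) ^ 3) *
          (1 + (k + 1) ^ 2 * (τ + 2 * √(spanBound k Y : ℝ) * decayRate k Y * Q)) +
          sieveError k Y / (decayRate k Y ^ (k + 1) * ((Y : ℝ) ^ (k + 1)) ^ 3))) atTop
      (𝓝 ((1 + τ) * (1 + (k + 1) ^ 2 * τ) / (2 / (9 * (k + 1)) * Q.totient) ^ (k + 1))) := by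
  have hQ' : (Q : ℝ) ≠ 0 := by exact_mod_cast hQ
  have hσ : (2 / (9 * (k + 1)) : ℝ) ≠ 0 := by positivity
  have hspan : Tendsto (fun Y => 2 * √(spanBound k Y : ℝ) * decayRate k Y * Q) atTop (𝓝 0) := by
    simpa [mul_assoc] using
      ((tendsto_sqrt_spanBound_mul_decayRate k).const_mul 2).mul_const (Q : ℝ)
  have hvalue : (1 + τ) * (1 + (k + 1) ^ 2 * τ) / (2 / (9 * (k + 1)) * Q.totient) ^ (k + 1) =
      (0 + 1 / (Q : ℝ)) ^ k * (1 / Q * ((1 + τ) * ((Q : ℝ) / Q.totient) ^ (k + 1)) /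
        (2 / (9 * (k + 1))) ^ (k + 1) * (1 + (k + 1) ^ 2 * (τ + 0)) + 0) := by
    generalize (2 / (9 * (k + 1)) : ℝ) = σ
    rw [zero_add, add_zero, add_zero, div_pow, div_pow, mul_pow]
    field_simp
    ring
  rw [hvalue]
  exact (((tendsto_decayRate k).add_const (1 / (Q : ℝ))).pow k).mul
    (((tendsto_sieveDensity_div k hQ hσ τ).mul
      (((hspan.const_add τ).const_mul ((k + 1 : ℝ) ^ 2)).const_add 1)).add
        (tendsto_sieveError_div k hσ))

lemma exp_neg_mul_pow_le_ncard (hQ : IsSievingModulus k w Q τ) :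
    Real.exp (-k) * (1 - Real.exp (-2)) ≤ (recurrentPatterns Q (k + 1)).ncard *
      ((1 + τ) * (1 + (k + 1) ^ 2 * τ) / (2 / (9 * (k + 1)) * Q.totient) ^ (k + 1)) := by
  refine ge_of_tendsto ((tendsto_sieve_bound_div k hQ.ne_zero τ).const_mul _) ?_
  filter_upwards [eventually_exp_le_ncard hQ, eventually_gt_atTop 1] with Y hbound hY
  have hs : 0 < decayRate k Y := decayRate_pos hY
  have hx : 0 < ((Y : ℝ) ^ (k + 1)) ^ 3 := by positivity
  have hQ0 : (0 : ℝ) < Q := by exact_mod_cast Nat.pos_of_ne_zero hQ.ne_zero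
  rw [← le_div_iff₀' (by positivity)] at hbound
  refine hbound.trans_eq ?_
  have hfactor : decayRate k Y + 1 / Q = decayRate k Y * (1 + 1 / (decayRate k Y * Q)) := by
    field_simp
  rw [hfactor, mul_pow, pow_succ (decayRate k Y)]
  field_simp

theorem pow_mul_exp_neg_le_ncard (hQ : IsSievingModulus k w Q τ)
    (hτ : (k + 1) ^ 2 * τ ≤ 1 / 8) :
    (2 / (9 * (k + 1)) * (Q.totient : ℝ)) ^ (k + 1) * Real.exp (-k) / 2 ≤
      (recurrentPatterns Q (k + 1)).ncard := by
  have hφ : (0 : ℝ) < Q.totient := by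
    exact_mod_cast Nat.totient_pos.2 (Nat.pos_of_ne_zero hQ.ne_zero)
  have hτ0 := hQ.tailBound.nonneg
  have hτ1 : τ ≤ 1 / 8 := (le_mul_of_one_le_left hτ0 (one_le_pow₀ (by simp))).trans hτ
  have hexp : Real.exp (-2) ≤ 1 / 3 := by
    rw [Real.exp_neg, inv_eq_one_div]
    exact one_div_le_one_div_of_le (by norm_num) (by linarith [Real.add_one_le_exp (2 : ℝ)])
  have hmain := exp_neg_mul_pow_le_ncard hQ
  rw [mul_div_assoc', le_div_iff₀ (by positivity)] at hmain
  set N : ℝ := ((recurrentPatterns Q (k + 1)).ncard : ℝ)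
  set P := (2 / (9 * (k + 1)) * (Q.totient : ℝ)) ^ (k + 1)
  have hconst : N * ((1 + τ) * (1 + (k + 1) ^ 2 * τ)) ≤ N * (9 / 8 * (9 / 8)) := by
    gcongr <;> linarith
  have hlower : Real.exp (-k) * (2 / 3) * P ≤ Real.exp (-k) * (1 - Real.exp (-2)) * P := by
    gcongr
    linarith
  have hPe : 0 ≤ P * Real.exp (-k) := by positivity
  linarith

end RecurrentPatterns

/-! ### From the sieving modulus to an arbitrary modulus -/

section Descent

variable {k q Q m n : ℕ} {τ : ℝ}

lemma eventually_tailBound (hτ : 0 < τ) : ∀ᶠ w in atTop, TailBound w τ := by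
  have hsum : Summable fun v : ℕ => 1 / ((v : ℝ) * √v) := by
    refine (Real.summable_one_div_nat_rpow (p := 1 + 1 / 2).2 (by norm_num)).congr fun v => ?_
    rw [Real.rpow_add' v.cast_nonneg (by norm_num), Real.rpow_one, ← Real.sqrt_eq_rpow]
  obtain ⟨s, hs⟩ := summable_iff_vanishing_norm.1 hsum τ hτ
  filter_upwards [eventually_ge_atTop (s.sup id)] with w hw R
  refine (le_abs_self _).trans (hs _ (disjoint_left.2 fun v hv hvs => ?_)).le
  exact (mem_Ioc.1 hv).1.not_ge ((le_sup (f := id) hvs).trans hw)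

lemma exists_isSievingModulus (k : ℕ) (hq : q ≠ 0) (hτ : 0 < τ) :
    ∃ w, IsSievingModulus k w (q * primorial w) τ := by
  obtain ⟨w, htail, hsq, hpow⟩ := ((eventually_tailBound hτ).and
    ((eventually_ge_atTop (4 * ((k + 1) * (k + 1) ^ 2) ^ 2)).and
      (eventually_ge_atTop ((2 * (k + 1)) ^ 4)))).exists
  exact ⟨w, mul_ne_zero hq (primorial_pos w).ne', Dvd.intro_left q rfl, hsq, hpow, htail⟩

lemma HasPattern.unitsMap {A : Fin m → (ZMod Q)ˣ} (hA : HasPattern A n) (h : q ∣ Q) :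
    HasPattern ((ZMod.unitsMap h).compLeft (Fin m) A) n := fun i => by
  simpa [ZMod.unitsMap_val] using congrArg (ZMod.castHom h (ZMod q)) (hA i)

lemma mapsTo_recurrentPatterns (h : q ∣ Q) :
    Set.MapsTo ((ZMod.unitsMap h).compLeft (Fin m)) (recurrentPatterns Q m)
      (recurrentPatterns q m) :=
  fun _ hA => Frequently.mono hA fun _ hn => hn.unitsMap h

lemma ncard_mul_card_le_of_mapsTo {G H : Type*} [Group G] [Group H] [Finite G] [Finite H]
    (f : G →* H) (hf : Function.Surjective f) {S : Set G} {T : Set H} (hST : Set.MapsTo f S T) :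
    S.ncard * Nat.card H ≤ T.ncard * Nat.card G := by
  classical
  have := Fintype.ofFinite G
  have := Fintype.ofFinite H
  have hfiber : ∀ y, #{x | f x = y} = #{x | f x = 1} := fun y =>
    MonoidHom.card_fiber_eq_of_mem_range f (hf y) (hf 1)
  have hcard : Nat.card G = #{x | f x = 1} * Nat.card H := by
    rw [Nat.card_eq_fintype_card, Nat.card_eq_fintype_card, ← card_univ, ← card_univ,
      card_eq_sum_card_fiberwise fun x _ => mem_coe.2 (mem_univ (f x)),
      sum_congr rfl fun y _ => hfiber y, sum_const, smul_eq_mul, mul_comm]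
  have hS : #S.toFinset ≤ #{x | f x = 1} * #T.toFinset :=
    card_le_mul_card_image_of_maps_to (f := f) (fun x hx => by simpa using hST (by simpa using hx))
      _ fun y _ => (card_le_card (filter_subset_filter _ (subset_univ _))).trans_eq (hfiber y)
  rw [Set.ncard_eq_toFinset_card', Set.ncard_eq_toFinset_card', hcard, mul_left_comm, ← mul_assoc]
  exact Nat.mul_le_mul_right _ hS

lemma ncard_recurrentPatterns_mul_totient_pow_le (hQ : Q ≠ 0) (h : q ∣ Q) (m : ℕ) :
    (recurrentPatterns Q m).ncard * q.totient ^ m ≤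
      (recurrentPatterns q m).ncard * Q.totient ^ m := by
  have : NeZero Q := ⟨hQ⟩
  have : NeZero q := ⟨ne_zero_of_dvd_ne_zero hQ h⟩
  simpa [ZMod.card_units_eq_totient] using
    ncard_mul_card_le_of_mapsTo ((ZMod.unitsMap h).compLeft (Fin m))
      (ZMod.unitsMap_surjective h).comp_left (mapsTo_recurrentPatterns h)

theorem totient_pow_mul_exp_neg_le_ncard (k : ℕ) (hq : q ≠ 0) :
    (2 / (9 * (k + 1)) * (q.totient : ℝ)) ^ (k + 1) * Real.exp (-k) / 2 ≤
      (recurrentPatterns q (k + 1)).ncard := by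
  obtain ⟨w, hQ⟩ := exists_isSievingModulus k hq (τ := 1 / (8 * (k + 1) ^ 2)) (by positivity)
  have hlower := pow_mul_exp_neg_le_ncard hQ (by field_simp; rfl)
  have hfibers := ncard_recurrentPatterns_mul_totient_pow_le hQ.ne_zero
    (Dvd.intro (primorial w) rfl : q ∣ _) (k + 1)
  have hφ : (0 : ℝ) < (q * primorial w).totient := by
    exact_mod_cast Nat.totient_pos.2 (Nat.pos_of_ne_zero hQ.ne_zero)
  generalize q * primorial w = Q at *
  refine le_of_mul_le_mul_right ?_ (pow_pos hφ (k + 1))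
  calc (2 / (9 * (k + 1)) * (q.totient : ℝ)) ^ (k + 1) * Real.exp (-k) / 2 * Q.totient ^ (k + 1)
      = (2 / (9 * (k + 1)) * (Q.totient : ℝ)) ^ (k + 1) * Real.exp (-k) / 2 *
          q.totient ^ (k + 1) := by
        rw [mul_pow, mul_pow]
        ring
    _ ≤ (recurrentPatterns Q (k + 1)).ncard * q.totient ^ (k + 1) := by gcongr
    _ ≤ (recurrentPatterns q (k + 1)).ncard * Q.totient ^ (k + 1) := by exact_mod_cast hfibers

lemma tendsto_consecCount_of_mem_recurrentPatterns {a : Fin m → (ZMod q)ˣ}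
    (ha : a ∈ recurrentPatterns q m) : Tendsto (consecCount q m a) atTop atTop := by
  refine tendsto_atTop.2 fun b => ?_
  obtain ⟨T, hT, rfl⟩ := (Nat.frequently_atTop_iff_infinite.1 ha).exists_subset_card_eq b
  filter_upwards [eventually_ge_atTop (nthPrime (T.sup id) : ℝ)] with x hx
  rw [consecCount, ← Set.ncard_coe_finset]
  refine Set.ncard_le_ncard (fun n hn => ⟨le_trans ?_ hx, hT hn⟩) ?_
  · exact_mod_cast strictMono_nthPrime.monotone (le_sup (f := id) hn)
  · exact (Set.finite_Iic ⌊x⌋₊).subset fun n hn =>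
      strictMono_nthPrime.le_apply.trans (Nat.le_floor hn.1)

theorem totient_pow_mul_exp_neg_le_ncard_tendsto (k : ℕ) (hq : q ≠ 0) :
    (2 / (9 * (k + 1)) * (q.totient : ℝ)) ^ (k + 1) * Real.exp (-k) / 2 ≤
      {a : Fin (k + 1) → (ZMod q)ˣ | Tendsto (consecCount q (k + 1) a) atTop atTop}.ncard := by
  have : NeZero q := ⟨hq⟩
  refine (totient_pow_mul_exp_neg_le_ncard k hq).trans ?_
  exact_mod_cast Set.ncard_le_ncard fun _ => tendsto_consecCount_of_mem_recurrentPatterns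

end Descent

/-! ### Numerical comparison with the threshold `M` -/

section Threshold

variable {m r t n M φ : ℕ}

lemma factorial_le_pow_pred (n : ℕ) : n.factorial ≤ n ^ (n - 1) := by
  cases n with
  | zero => simp
  | succ n =>
    rw [Nat.add_sub_cancel]
    simpa using (Nat.factorial_mul_descFactorial n.le_succ).symm.trans_le
      (Nat.mul_le_mul_left _ ((n + 1).descFactorial_le_pow n))

lemma factorial_le_half_pow (n : ℕ) : (n.factorial : ℝ) ≤ (((n : ℝ) + 1) / 2) ^ n := by
  induction n with
  | zero => simp
  | succ n ih =>
    have hbernoulli : (2 : ℝ) ≤ (1 + 1 / ((n : ℝ) + 1)) ^ (n + 1) := by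
      refine le_trans (le_of_eq ?_) (one_add_mul_le_pow ?_ (n + 1))
      · push_cast
        field_simp
        norm_num
      · exact (by norm_num : (-2 : ℝ) ≤ 0).trans (by positivity)
    calc ((n + 1).factorial : ℝ) = (n + 1) * n.factorial := by
          rw [Nat.factorial_succ]
          push_cast
          rfl
      _ ≤ (n + 1) * (((n : ℝ) + 1) / 2) ^ n := by gcongr
      _ = (((n : ℝ) + 1) / 2) ^ (n + 1) * 2 := by ring
      _ ≤ (((n : ℝ) + 1) / 2) ^ (n + 1) * (1 + 1 / ((n : ℝ) + 1)) ^ (n + 1) := by gcongr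
      _ = (((n + 1 : ℕ) + 1) / 2) ^ (n + 1) := by
          rw [← mul_pow]
          push_cast
          field_simp

/-- The factor by which `Mval m (t + 1)` exceeds `m`, before rounding up. -/
noncomputable def thresholdFactor (m t : ℕ) : ℝ :=
  ((2 : ℝ) ^ (3 * t + 1) * (t : ℝ) ^ (2 * t + 1) / (t + 1).factorial) ^ (1 / (t : ℝ)) *
    ((m : ℝ) * t + (t + 1)) ^ (1 / (t : ℝ))

lemma thresholdFactor_mul_le_Mval (m t : ℕ) : thresholdFactor m t * m ≤ Mval m (t + 1) := by
  rw [Mval, show 3 * (t + 1) - 2 = 3 * t + 1 by omega, show 2 * (t + 1) - 1 = 2 * t + 1 by omega,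
    Nat.cast_succ, add_sub_cancel_right]
  refine le_trans (le_of_eq ?_) (Nat.le_ceil _)
  rw [thresholdFactor, mul_right_comm]

lemma thresholdFactor_one (m : ℕ) : thresholdFactor m 1 = 8 * (m + 2) := by
  norm_num [thresholdFactor, Nat.factorial, add_assoc]

lemma factorial_succ_le_two_mul_pow (ht : 1 ≤ t) : (t + 1).factorial ≤ 2 * t ^ t := by
  calc (t + 1).factorial = (t + 1) * t.factorial := Nat.factorial_succ t
    _ ≤ (2 * t) * t ^ (t - 1) := Nat.mul_le_mul (by omega) (factorial_le_pow_pred t)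
    _ = 2 * t ^ t := by rw [mul_assoc, mul_pow_sub_one (by omega)]

lemma sixteen_pow_le (ht : 2 ≤ t) :
    (16 : ℝ) ^ t ≤ 2 ^ (3 * t + 1) * (t : ℝ) ^ (2 * t + 1) / (t + 1).factorial := by
  have ht' : (2 : ℝ) ≤ t := by exact_mod_cast ht
  rw [le_div_iff₀ (by positivity)]
  calc (16 : ℝ) ^ t * (t + 1).factorial ≤ 16 ^ t * (2 * (t : ℝ) ^ t) := by
        gcongr
        exact_mod_cast factorial_succ_le_two_mul_pow (by omega)
    _ = 8 ^ t * 2 ^ t * (2 * (t : ℝ) ^ t) * 1 := by rw [← mul_pow, mul_one]; norm_num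
    _ ≤ 8 ^ t * (t : ℝ) ^ t * (2 * (t : ℝ) ^ t) * t := by gcongr; linarith
    _ = 2 ^ (3 * t + 1) * (t : ℝ) ^ (2 * t + 1) := by
        rw [show (8 : ℝ) = 2 ^ 3 by norm_num, ← pow_mul]
        ring

lemma sixteen_mul_rpow_le_thresholdFactor (m : ℕ) (ht : 2 ≤ t) :
    16 * ((m : ℝ) * t + (t + 1)) ^ (1 / (t : ℝ)) ≤ thresholdFactor m t := by
  rw [thresholdFactor]
  gcongr
  rw [one_div, Real.le_rpow_inv_iff_of_pos (by norm_num) (by positivity) (by positivity),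
    Real.rpow_natCast]
  exact sixteen_pow_le ht

lemma one_le_mul_add_succ (m t : ℕ) : (1 : ℝ) ≤ (m : ℝ) * t + (t + 1) := by
  exact_mod_cast (by omega : 1 ≤ m * t + (t + 1))

lemma sixteen_le_thresholdFactor (m : ℕ) (ht : 1 ≤ t) : 16 ≤ thresholdFactor m t := by
  obtain rfl | ht := ht.eq_or_lt
  · rw [thresholdFactor_one]
    linarith [m.cast_nonneg (α := ℝ)]
  · exact (le_mul_of_one_le_right (by norm_num) (Real.one_le_rpow (one_le_mul_add_succ m t)
      (by positivity))).trans (sixteen_mul_rpow_le_thresholdFactor m ht)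

lemma factorial_ceil_div_le_rpow_pow (m : ℕ) (ht : 1 ≤ t) :
    (⌈(m : ℝ) / t⌉₊.factorial : ℝ) ≤ (((m : ℝ) * t + (t + 1)) ^ (1 / (t : ℝ))) ^ m := by
  set n := ⌈(m : ℝ) / t⌉₊
  have hbase := one_le_mul_add_succ m t
  have hn_lt : (n : ℝ) < m / t + 1 := Nat.ceil_lt_add_one (by positivity)
  have hn_le : (n : ℝ) ≤ m * t + (t + 1) := by
    have ht' : (1 : ℝ) ≤ t := by exact_mod_cast ht
    have hdiv : (m : ℝ) / t ≤ m := div_le_self m.cast_nonneg ht'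
    have hmul : (m : ℝ) ≤ m * t := le_mul_of_one_le_right m.cast_nonneg ht'
    linarith
  have hpred : ((n - 1 : ℕ) : ℝ) ≤ m / t := by
    obtain hn | hn := n.eq_zero_or_pos
    · simp only [hn, Nat.zero_sub, Nat.cast_zero]
      positivity
    · rw [Nat.cast_pred hn]
      linarith
  calc (n.factorial : ℝ) ≤ (n : ℝ) ^ (n - 1) := by exact_mod_cast factorial_le_pow_pred n
    _ ≤ ((m : ℝ) * t + (t + 1)) ^ (n - 1) := by gcongr
    _ ≤ ((m : ℝ) * t + (t + 1)) ^ ((m : ℝ) / t) := by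
        rw [← Real.rpow_natCast]
        exact Real.rpow_le_rpow_of_exponent_le hbase hpred
    _ = (((m : ℝ) * t + (t + 1)) ^ (1 / (t : ℝ))) ^ m := by
        rw [← Real.rpow_mul_natCast (by positivity), div_mul_eq_mul_div, one_mul]

lemma factorial_ceil_div_le_thresholdFactor_pow (m : ℕ) (ht : 1 ≤ t) :
    (⌈(m : ℝ) / t⌉₊.factorial : ℝ) ≤ (76 / 1000 * thresholdFactor m t) ^ m := by
  obtain rfl | ht := ht.eq_or_lt
  · rw [thresholdFactor_one, Nat.cast_one, div_one, Nat.ceil_natCast]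
    refine (factorial_le_half_pow m).trans (pow_le_pow_left₀ (by positivity) ?_ m)
    linarith [m.cast_nonneg (α := ℝ)]
  · refine (factorial_ceil_div_le_rpow_pow m ht.le).trans (pow_le_pow_left₀ (by positivity) ?_ m)
    have hfactor := sixteen_mul_rpow_le_thresholdFactor m ht
    have hroot : 0 ≤ ((m : ℝ) * t + (t + 1)) ^ (1 / (t : ℝ)) := by positivity
    linarith

lemma sixteen_mul_le_Mval (m : ℕ) (hr : 2 ≤ r) : 16 * m ≤ Mval m r := by
  obtain ⟨t, rfl⟩ := Nat.exists_eq_add_of_le' (one_le_two.trans hr)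
  have hfactor := sixteen_le_thresholdFactor m (by omega : 1 ≤ t)
  exact_mod_cast (mul_le_mul_of_nonneg_right hfactor m.cast_nonneg).trans
    (thresholdFactor_mul_le_Mval m t)

lemma factorial_ceil_div_mul_pow_le_Mval_pow (m : ℕ) (hr : 2 ≤ r) :
    (⌈(m : ℝ) / ((r : ℝ) - 1)⌉₊.factorial : ℝ) * (m : ℝ) ^ m ≤ (76 / 1000 * Mval m r) ^ m := by
  obtain ⟨t, rfl⟩ := Nat.exists_eq_add_of_le' (one_le_two.trans hr)
  have hfactor := sixteen_le_thresholdFactor m (by omega : 1 ≤ t)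
  rw [Nat.cast_add_one, add_sub_cancel_right]
  calc (⌈(m : ℝ) / t⌉₊.factorial : ℝ) * (m : ℝ) ^ m
      ≤ (76 / 1000 * thresholdFactor m t) ^ m * (m : ℝ) ^ m := by
        gcongr
        exact factorial_ceil_div_le_thresholdFactor_pow m (by omega)
    _ = (76 / 1000 * (thresholdFactor m t * m)) ^ m := by rw [← mul_pow, mul_assoc]
    _ ≤ (76 / 1000 * Mval m (t + 1)) ^ m := by
        gcongr
        exact thresholdFactor_mul_le_Mval m t

lemma pow_le_descFactorial (hnM : 16 * n ≤ M) :
    (15 / 16 * (M : ℝ)) ^ n ≤ M.descFactorial n := by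
  have hnM' : 16 * (n : ℝ) ≤ M := by exact_mod_cast hnM
  calc (15 / 16 * (M : ℝ)) ^ n ≤ ((M + 1 - n : ℕ) : ℝ) ^ n := by
        gcongr
        rw [Nat.cast_sub (by omega)]
        push_cast
        linarith
    _ ≤ M.descFactorial n := by exact_mod_cast Nat.pow_sub_le_descFactorial M n

lemma factorial_div_descFactorial_mul_le (hm : 0 < m) (hnm : n ≤ m) (hmM : 16 * m ≤ M)
    (hMφ : M ≤ φ) (hfact : (n.factorial : ℝ) * (m : ℝ) ^ m ≤ (76 / 1000 * M) ^ m) :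
    (n.factorial : ℝ) / M.descFactorial n * φ.descFactorial n ≤
      (152 / 1875 * ((φ : ℝ) / m)) ^ m := by
  have hM : (0 : ℝ) < M := by exact_mod_cast (by omega : 0 < M)
  have hMφ' : (M : ℝ) ≤ φ := by exact_mod_cast hMφ
  have hone : 1 ≤ φ / (15 / 16 * (M : ℝ)) := by
    rw [one_le_div (by positivity)]
    linarith
  calc (n.factorial : ℝ) / M.descFactorial n * φ.descFactorial n
      ≤ n.factorial / (15 / 16 * (M : ℝ)) ^ n * (φ : ℝ) ^ n := by
        gcongr
        · exact pow_le_descFactorial (by omega)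
        · exact_mod_cast Nat.descFactorial_le_pow φ n
    _ = n.factorial * (φ / (15 / 16 * (M : ℝ))) ^ n := by rw [div_pow, div_mul_eq_mul_div, mul_div]
    _ ≤ n.factorial * (φ / (15 / 16 * (M : ℝ))) ^ m := by gcongr
    _ ≤ (76 / 1000 * M) ^ m / (m : ℝ) ^ m * (φ / (15 / 16 * (M : ℝ))) ^ m := by
        gcongr
        exact (le_div_iff₀ (by positivity)).2 hfact
    _ = (152 / 1875 * ((φ : ℝ) / m)) ^ m := by
        rw [← div_pow, ← mul_pow]
        congr 1
        field_simp
        ring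

lemma pow_le_pow_mul_exp_neg_div_two (k : ℕ) {y : ℝ} (hy : 0 ≤ y) :
    (152 / 1875 * (y / (k + 1 : ℕ))) ^ (k + 1) ≤
      (2 / (9 * (k + 1)) * y) ^ (k + 1) * Real.exp (-k) / 2 := by
  have hexp : Real.exp (-k) = Real.exp 1 * (Real.exp 1)⁻¹ ^ (k + 1) := by
    rw [← Real.exp_neg, ← Real.exp_nat_mul, ← Real.exp_add]
    push_cast
    ring_nf
  calc (152 / 1875 * (y / (k + 1 : ℕ))) ^ (k + 1)
      ≤ (2 / 9 * (Real.exp 1)⁻¹ * (y / (k + 1 : ℕ))) ^ (k + 1) := by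
        gcongr
        rw [← div_eq_mul_inv, le_div_iff₀ (by positivity)]
        linarith [Real.exp_one_lt_d9]
    _ = (2 / (9 * (k + 1)) * y) ^ (k + 1) * (Real.exp 1)⁻¹ ^ (k + 1) * 1 := by
        rw [mul_one, ← mul_pow]
        push_cast
        field_simp
    _ ≤ (2 / (9 * (k + 1)) * y) ^ (k + 1) * (Real.exp 1)⁻¹ ^ (k + 1) * (Real.exp 1 / 2) := by
        gcongr
        linarith [Real.exp_one_gt_d9]
    _ = (2 / (9 * (k + 1)) * y) ^ (k + 1) * Real.exp (-k) / 2 := by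
        rw [hexp]
        ring

end Threshold

end ConsecutivePrimes

open ConsecutivePrimes in
theorem stmt4_general (m r : ℕ) (hm : 0 < m) (hr : 2 ≤ r) (q : ℕ) (hφ : Mval m r ≤ q.totient) :
    (⌈(m : ℝ) / ((r : ℝ) - 1)⌉₊.factorial : ℝ) /
          ((Mval m r).descFactorial ⌈(m : ℝ) / ((r : ℝ) - 1)⌉₊ : ℝ) *
        (q.totient.descFactorial ⌈(m : ℝ) / ((r : ℝ) - 1)⌉₊ : ℝ) ≤
      ({a : Fin m → (ZMod q)ˣ | Tendsto (consecCount q m a) atTop atTop}.ncard : ℝ) := by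
  obtain ⟨k, rfl⟩ := Nat.exists_eq_add_one.2 hm
  have hM := sixteen_mul_le_Mval (k + 1) hr
  have hq : 0 < q := Nat.totient_pos.1 (by omega)
  have hr' : (2 : ℝ) ≤ r := by exact_mod_cast hr
  have hceil : ⌈((k + 1 : ℕ) : ℝ) / ((r : ℝ) - 1)⌉₊ ≤ k + 1 :=
    Nat.ceil_le.2 (div_le_self (Nat.cast_nonneg _) (by linarith))
  calc _ ≤ (152 / 1875 * ((q.totient : ℝ) / (k + 1 : ℕ))) ^ (k + 1) :=
        factorial_div_descFactorial_mul_le hm hceil hM hφ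
          (factorial_ceil_div_mul_pow_le_Mval_pow (k + 1) hr)
    _ ≤ (2 / (9 * (k + 1)) * q.totient) ^ (k + 1) * Real.exp (-k) / 2 :=
        pow_le_pow_mul_exp_neg_div_two k (Nat.cast_nonneg _)
    _ ≤ _ := totient_pow_mul_exp_neg_le_ncard_tendsto k hq.ne'

theorem stmt4 (m r : ℕ) (hm : 0 < m) (hr : 2 ≤ r) (q : ℕ) (hq : 0 < q) (hsq : Squarefree q)
    (hφ : Mval m r ≤ q.totient) :
    (⌈(m : ℝ) / ((r : ℝ) - 1)⌉₊.factorial : ℝ) /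
          ((Mval m r).descFactorial ⌈(m : ℝ) / ((r : ℝ) - 1)⌉₊ : ℝ) *
        (q.totient.descFactorial ⌈(m : ℝ) / ((r : ℝ) - 1)⌉₊ : ℝ) ≤
      ({a : Fin m → (ZMod q)ˣ | Tendsto (consecCount q m a) atTop atTop}.ncard : ℝ) :=
  stmt4_general m r hm hr q hφ
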